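/- arXiv:2110.00769 — 7 statements merged into one kernel-verified Lean document; each statement's English description precedes it below -/
import Mathlib

section
/- Let q be a prime power, n ≥ 2, let α_1, …, α_n be pairwise distinct elements of 𝔽_{q²}, and let v_1, …, v_n ∈ 𝔽_{q²}^* satisfy v_i^{q+1} · ∏_{j≠i}(α_i − α_j) = 1 for all i. Let k ≥ 1 be an integer with k(q+1) ≤ n + q − 1. Then the code C = {(v_1 f(α_1), …, v_n f(α_n)) : f ∈ 𝔽_{q²}[x], deg f ≤ k−1} is an MDS Hermitian self-orthogonal [n,k]_{q²} code. -/
/-!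
Every codeword has the form `(vᵢ f(αᵢ))ᵢ` with `deg f < k`, and the numerical hypothesis forces
`k < n`.

*MDS.* A nonzero `f` of degree `< k` vanishes at at most `k - 1` of the distinct points `αᵢ`
(`le_weight`), so evaluation is injective on polynomials of degree `< k`, the code has dimension
`k`, and every nonzero word has weight at least `n - k + 1`. The bound is attained by
`∏_{i < k - 1} (X - αᵢ)`.

*Self-orthogonality.* The Hermitian product of the words of `f` and `g` is
`∑ᵢ vᵢ^(q+1) (f g^q)(αᵢ) = ∑ᵢ (f g^q)(αᵢ) / ∏_{j ≠ i} (αᵢ - αⱼ)`. By Lagrange interpolation this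
is the coefficient of `X^(n-1)` in `f g^q`, the elementary form of the residue theorem on the
projective line. It vanishes because `deg (f g^q) ≤ (k - 1)(q + 1) ≤ n - 2`.
-/

open scoped BigOperators

/-- A linear code `C ⊆ 𝔽_{q²}ⁿ` is Hermitian self-orthogonal if
`⟨c,c'⟩_H = ∑ i, c i * (c' i)^q = 0` for all codewords `c, c'`. -/
def IsHermSelfOrth (q : ℕ) {F : Type*} [Field F] {n : ℕ}
    (C : Submodule F (Fin n → F)) : Prop :=
  ∀ c ∈ C, ∀ c' ∈ C, ∑ i, c i * (c' i) ^ q = 0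

/-- The minimum Hamming distance of the code `C` equals `d`. -/
def MinDistEq {F : Type*} [Field F] {n : ℕ}
    (C : Submodule F (Fin n → F)) (d : ℕ) : Prop :=
  (∀ c ∈ C, c ≠ 0 → d ≤ Set.ncard {i | c i ≠ 0}) ∧
  (∃ c ∈ C, c ≠ 0 ∧ Set.ncard {i | c i ≠ 0} = d)

/-- The generalized Reed–Solomon evaluation code
`{(v₁ f(α₁), …, vₙ f(αₙ)) : f ∈ F[x], deg f ≤ k − 1}` (polynomials of degree `< k`). -/
noncomputable def evalCode {F : Type*} [Field F] {n : ℕ} (k : ℕ)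
    (α v : Fin n → F) : Submodule F (Fin n → F) :=
  Submodule.map
    (show Polynomial F →ₗ[F] (Fin n → F) from
      { toFun := fun f : Polynomial F => fun i => v i * Polynomial.eval (α i) f
        map_add' := fun f g => by funext i; simp [mul_add]
        map_smul' := fun c f => by
          funext i; simp [Polynomial.eval_smul, smul_eq_mul]; ring })
    (Polynomial.degreeLT F k)

open Polynomial

theorem mem_evalCode {F : Type*} [Field F] {n k : ℕ} {α v c : Fin n → F} :
    c ∈ evalCode k α v ↔ ∃ f : F[X], f.degree < k ∧ (fun i => v i * f.eval (α i)) = c := by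
  unfold evalCode
  rw [Submodule.mem_map]
  simp only [mem_degreeLT]
  rfl

/-- A nonzero polynomial of degree `< k` has fewer than `k` zeros among the `αᵢ`, so its codeword
has at least `n - k + 1` nonzero coordinates. -/
theorem le_weight {F : Type*} [Field F] {n k : ℕ} {α v : Fin n → F}
    (hα : Function.Injective α) (hv : ∀ i, v i ≠ 0) (hkn : k ≤ n) {f : F[X]}
    (hf : f.degree < k) (hf0 : f ≠ 0) :
    n - k + 1 ≤ Set.ncard {i | v i * f.eval (α i) ≠ 0} := by
  classical
  have hz : (Finset.univ.filter fun i => f.eval (α i) = 0).card < k := by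
    by_contra! h
    refine hf0 (eq_zero_of_degree_lt_of_eval_index_eq_zero
      (s := Finset.univ.filter fun i => f.eval (α i) = 0) (v := α) hα.injOn
      (hf.trans_le (by exact_mod_cast h)) ?_)
    intro i hi
    simpa using hi
  have hset : {i | v i * f.eval (α i) ≠ 0} =
      ((Finset.univ.filter fun i => ¬ f.eval (α i) = 0 : Finset (Fin n)) : Set (Fin n)) := by
    ext i
    simp [hv i]
  rw [hset, Set.ncard_coe_finset]
  have := Finset.card_filter_add_card_filter_not (s := (Finset.univ : Finset (Fin n)))
    (fun i => f.eval (α i) = 0)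
  rw [Finset.card_univ, Fintype.card_fin] at this
  omega

theorem finrank_evalCode {F : Type*} [Field F] {n k : ℕ} {α v : Fin n → F}
    (hα : Function.Injective α) (hv : ∀ i, v i ≠ 0) (hkn : k ≤ n) :
    Module.finrank F (evalCode k α v) = k := by
  unfold evalCode
  rw [← LinearMap.range_domRestrict, LinearMap.finrank_range_of_inj,
    (degreeLTEquiv F k).finrank_eq, Module.finrank_fin_fun]
  rw [← LinearMap.ker_eq_bot, LinearMap.ker_eq_bot']
  rintro ⟨f, hf⟩ h
  by_contra hne
  have hw := le_weight hα hv hkn (mem_degreeLT.1 hf) (fun h0 => hne (Subtype.ext h0))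
  have hzero : ∀ i, v i * f.eval (α i) = 0 := fun i => congrFun h i
  simp [hzero] at hw

theorem minDistEq_evalCode {F : Type*} [Field F] {n k : ℕ} {α v : Fin n → F}
    (hα : Function.Injective α) (hv : ∀ i, v i ≠ 0) (hk : 1 ≤ k) (hkn : k ≤ n) :
    MinDistEq (evalCode k α v) (n - k + 1) := by
  classical
  constructor
  · intro c hc hc0
    obtain ⟨f, hf, rfl⟩ := mem_evalCode.1 hc
    refine le_weight hα hv hkn hf ?_
    rintro rfl
    exact hc0 (by ext i; simp)
  · obtain ⟨T, -, hT⟩ := Finset.exists_subset_card_eq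
      (s := (Finset.univ : Finset (Fin n))) (n := k - 1) (by simp; omega)
    have hset : {i | v i * (∏ j ∈ T, (X - C (α j))).eval (α i) ≠ 0} =
        ((Tᶜ : Finset (Fin n)) : Set (Fin n)) := by
      ext i
      simp [hv i, eval_prod, Finset.prod_eq_zero_iff, sub_eq_zero, hα.eq_iff]
    have hcard : Set.ncard {i | v i * (∏ j ∈ T, (X - C (α j))).eval (α i) ≠ 0} = n - k + 1 := by
      rw [hset, Set.ncard_coe_finset, Finset.card_compl, hT, Fintype.card_fin]
      omega
    refine ⟨_, mem_evalCode.2 ⟨∏ j ∈ T, (X - C (α j)), ?_, rfl⟩, ?_, hcard⟩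
    · rw [degree_prod]
      simp only [degree_X_sub_C, Finset.sum_const, hT, nsmul_eq_mul, mul_one]
      exact_mod_cast (by omega : k - 1 < k)
    · intro h0
      have hzero := fun i => congrFun h0 i
      simp only [Pi.zero_apply] at hzero
      simp [hzero] at hcard

/-- The bound `(k - 1)(q + 1) + 1 < n` says that `f g^q` has degree at most `n - 2`. -/
theorem isHermSelfOrth_evalCode {F : Type*} [Field F] {q n k : ℕ} {α v : Fin n → F}
    (hα : Function.Injective α)
    (hnorm : ∀ i, v i ^ (q + 1) * ∏ j ∈ Finset.univ.erase i, (α i - α j) = 1)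
    (hk : (k - 1) * (q + 1) + 1 < n) :
    IsHermSelfOrth q (evalCode k α v) := by
  intro c hc c' hc'
  obtain ⟨f, hf, rfl⟩ := mem_evalCode.1 hc
  obtain ⟨g, hg, rfl⟩ := mem_evalCode.1 hc'
  have hnat : ∀ p : F[X], p.degree < k → p.natDegree ≤ k - 1 := fun p hp =>
    natDegree_le_of_degree_le (by
      rw [degree_le_iff_coeff_zero]
      intro m hm
      refine coeff_eq_zero_of_degree_lt (hp.trans_le ?_)
      have hm' : k - 1 < m := by exact_mod_cast hm
      exact_mod_cast (by omega : k ≤ m))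
  have hdeg : (f * g ^ q).natDegree ≤ (k - 1) * (q + 1) := by
    have h1 := natDegree_mul_le (p := f) (q := g ^ q)
    have h2 := natDegree_pow_le (p := g) (n := q)
    have h3 := Nat.mul_le_mul_left q (hnat g hg)
    have h4 := hnat f hf
    linarith
  have hlt : (f * g ^ q).degree < (Finset.univ : Finset (Fin n)).card := by
    rw [Finset.card_univ, Fintype.card_fin]
    refine degree_le_natDegree.trans_lt ?_
    exact_mod_cast (by omega : (f * g ^ q).natDegree < n)
  have hsum := Lagrange.coeff_eq_sum (v := α) hα.injOn hlt
  rw [Finset.card_univ, Fintype.card_fin, coeff_eq_zero_of_natDegree_lt (by omega)] at hsum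
  rw [hsum]
  refine Finset.sum_congr rfl fun i _ => ?_
  rw [div_eq_mul_inv, ← eq_inv_of_mul_eq_one_left (hnorm i), eval_mul, eval_pow]
  ring

/-- Genus-zero sufficient condition: with `vᵢ^{q+1} ∏_{j≠i}(αᵢ−αⱼ) = 1` and
`k(q+1) ≤ n+q−1`, the GRS code `{(v₁f(α₁),…,vₙf(αₙ)) : deg f ≤ k−1}` is an MDS
Hermitian self-orthogonal `[n,k]_{q²}` code. -/
theorem stmt2 (q : ℕ) (hq : IsPrimePow q)
    (F : Type*) [Field F] [Fintype F] (hF : Fintype.card F = q ^ 2)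
    (n : ℕ) (hn : 2 ≤ n)
    (α : Fin n → F) (hα : Function.Injective α)
    (v : Fin n → F) (hv : ∀ i, v i ≠ 0)
    (hnorm : ∀ i, v i ^ (q + 1) * ∏ j ∈ Finset.univ.erase i, (α i - α j) = 1)
    (k : ℕ) (hk1 : 1 ≤ k) (hk2 : k * (q + 1) ≤ n + q - 1) :
    Module.finrank F (evalCode k α v) = k ∧
    IsHermSelfOrth q (evalCode k α v) ∧
    MinDistEq (evalCode k α v) (n - k + 1) := by
  have hkn : k < n := by
    by_contra! h
    have := Nat.mul_le_mul_right q h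
    have := Nat.mul_le_mul_right q hn
    rw [mul_add, mul_one] at hk2
    omega
  have hdeg : (k - 1) * (q + 1) + 1 < n := by
    obtain ⟨m, rfl⟩ := Nat.exists_eq_add_of_le' hk1
    rw [add_mul, one_mul] at hk2
    rw [Nat.add_sub_cancel]
    omega
  exact ⟨finrank_evalCode hα hv hkn.le, isHermSelfOrth_evalCode hα hnorm hdeg,
    minDistEq_evalCode hα hv hk1 hkn.le⟩
end

section
/- Let q be a prime power, let α_1, …, α_n be pairwise distinct elements of 𝔽_{q²}, let v_1, …, v_n ∈ 𝔽_{q²}^* satisfy v_i^{q+1} · ∏_{j≠i}(α_i − α_j) = 1 for all i, and let k ≥ 1 satisfy k(q+1) = n−1, so that C_k = {(v_1 f(α_1), …, v_n f(α_n)) : deg f ≤ k−1} is an MDS Hermitian self-orthogonal [n,k]_{q²} code. Let α ∈ 𝔽_{q²} satisfy α^{q+1} = −1. Then the code of length n+1 spanned by the vectors (v_1 α_1^j, …, v_n α_n^j, 0) for 0 ≤ j ≤ k−1 together with the vector (v_1 α_1^k, …, v_n α_n^k, α) is an MDS Hermitian self-orthogonal [n+1, k+1]_{q²} code. -/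
/-!
The extended code is the image of the polynomials `f` of degree at most `k` under
`f ↦ (v₁ f(α₁), …, vₙ f(αₙ), a · f_k)`, where `f_k` is the coefficient of `X ^ k` in `f`
(`extCode_eq_map`), and all three claims are read off from this description.

* Self-orthogonality: `v_i ^ (q + 1) = 1 / ∏_{j ≠ i} (α_i - α_j)` is the Lagrange weight at `α_i`,
  so `∑ i, v_i ^ (q + 1) P(α_i)` is the coefficient of `X ^ (n - 1)` in `P` whenever `deg P < n`.
  For `P = f * g ^ q`, of degree at most `k (q + 1) = n - 1`, that coefficient is `f_k * g_k ^ q`,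
  and the last coordinate contributes `a ^ (q + 1) f_k g_k ^ q = -f_k g_k ^ q`.
* Distance: a nonzero `f` has at most `k` zeros among the `α_i`, and at most `k - 1` if `f_k = 0`,
  in which case the last coordinate vanishes as well. Hence every nonzero `f` gives a word of weight
  at least `n - k + 1` (`le_weight_extMap`). The bound is attained by a word of minimum weight of
  the original code, padded with a zero.
* Dimension: the weight bound makes the evaluation map injective on polynomials of degree `≤ k`.
-/

open scoped BigOperators

/-- The extended code of length `n+1` spanned by `(v₁α₁ʲ,…,vₙαₙʲ,0)` for `0 ≤ j ≤ k−1`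
together with `(v₁α₁ᵏ,…,vₙαₙᵏ,a)`. -/
def extCode {F : Type*} [Field F] {n : ℕ} (k : ℕ) (α v : Fin n → F) (a : F) :
    Submodule F (Fin (n + 1) → F) :=
  Submodule.span F
    ({w | ∃ j < k, w = Fin.snoc (fun i => v i * α i ^ j) 0} ∪
      {Fin.snoc (fun i => v i * α i ^ k) a})

open Polynomial in
/-- The evaluation map `f ↦ (v₁ f(α₁), …, vₙ f(αₙ), a · f_k)`, with `f_k` the coefficient of `X ^ k`
in `f`; the last coordinate is evaluation at infinity for polynomials of degree at most `k`. -/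
noncomputable def extMap {F : Type*} [Field F] {n : ℕ} (k : ℕ) (α v : Fin n → F) (a : F) :
    F[X] →ₗ[F] (Fin (n + 1) → F) where
  toFun f := Fin.snoc (fun i => v i * f.eval (α i)) (a * f.coeff k)
  map_add' f g := by
    funext i
    refine Fin.lastCases ?_ (fun i => ?_) i <;> simp [mul_add]
  map_smul' c f := by
    funext i
    refine Fin.lastCases ?_ (fun i => ?_) i <;> simp <;> ring

section

open Polynomial

variable {F : Type*} [Field F] {n : ℕ}

lemma extMap_apply (k : ℕ) (α v : Fin n → F) (a : F) (f : F[X]) :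
    extMap k α v a f = Fin.snoc (fun i => v i * f.eval (α i)) (a * f.coeff k) := rfl

lemma extCode_eq_map (k : ℕ) (α v : Fin n → F) (a : F) :
    extCode k α v a = (degreeLT F (k + 1)).map (extMap k α v a) := by
  classical
  rw [degreeLT_eq_span_X_pow, Submodule.map_span, extCode]
  congr 1
  ext w
  simp only [Set.mem_union, Set.mem_ofPred_eq, Set.mem_singleton_iff, Set.mem_image,
    Finset.coe_image, Finset.coe_range, Set.mem_Iio, exists_exists_and_eq_and, extMap_apply,
    eval_pow, eval_X, coeff_X_pow]
  constructor
  · rintro (⟨j, hj, rfl⟩ | rfl)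
    · exact ⟨j, by omega, by simp [hj.ne']⟩
    · exact ⟨k, by omega, by simp⟩
  · rintro ⟨j, hj, rfl⟩
    rcases Nat.lt_succ_iff_lt_or_eq.mp hj with h | rfl
    · exact Or.inl ⟨j, h, by simp [h.ne']⟩
    · exact Or.inr (by simp)

open Classical in
lemma ncard_support_snoc (c : Fin n → F) (x : F) :
    Set.ncard {i | (Fin.snoc c x : Fin (n + 1) → F) i ≠ 0}
      = Set.ncard {i | c i ≠ 0} + if x ≠ 0 then 1 else 0 := by
  rw [Set.ncard_eq_toFinset_card', Set.ncard_eq_toFinset_card', Set.toFinset_ofPred,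
    Set.toFinset_ofPred, Finset.card_filter, Finset.card_filter, Fin.sum_univ_castSucc]
  simp

/-- A nonzero polynomial vanishes at no more of the distinct points `α i` than its degree. -/
lemma le_ncard_eval_ne_zero {α v : Fin n → F} (hα : Function.Injective α) (hv : ∀ i, v i ≠ 0)
    {f : F[X]} (hf : f ≠ 0) :
    n ≤ Set.ncard {i | v i * f.eval (α i) ≠ 0} + f.natDegree := by
  classical
  rw [Set.ncard_eq_toFinset_card', Set.toFinset_ofPred]
  have h1 := Finset.card_filter_add_card_filter_not (s := (Finset.univ : Finset (Fin n)))
    (fun i => v i * f.eval (α i) ≠ 0)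
  have h2 : (Finset.univ.filter fun i => ¬ v i * f.eval (α i) ≠ 0).card ≤ f.natDegree := by
    rw [← Finset.card_image_of_injective _ hα]
    apply card_le_degree_of_subset_roots
    intro x hx
    simp only [Finset.mem_val, Finset.mem_image, Finset.mem_filter] at hx
    obtain ⟨i, ⟨-, hi⟩, rfl⟩ := hx
    rw [mem_roots hf, IsRoot]
    simpa [hv i] using hi
  rw [Finset.card_univ, Fintype.card_fin] at h1
  omega

lemma le_weight_extMap {k : ℕ} {α v : Fin n → F} {a : F} (hα : Function.Injective α)
    (hv : ∀ i, v i ≠ 0) (ha : a ≠ 0) {f : F[X]} (hf : f ≠ 0) (hfk : f.natDegree ≤ k) :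
    n + 1 ≤ Set.ncard {i | extMap k α v a f i ≠ 0} + k := by
  classical
  have h := le_ncard_eval_ne_zero hα hv hf
  rw [extMap_apply, ncard_support_snoc]
  by_cases h0 : f.coeff k = 0
  · -- The coefficient of `X ^ k` vanishes, so the degree drops below `k`.
    have hne : f.natDegree ≠ k := by
      rintro rfl
      exact hf (leadingCoeff_eq_zero.mp h0)
    omega
  · rw [if_pos (mul_ne_zero ha h0)]
    omega

/-- The weights `v i ^ (q + 1)` extract the coefficient of `X ^ (n - 1)`, by Lagrange
interpolation. -/
lemma sum_weight_mul_eval {q : ℕ} {α v : Fin n → F} (hα : Function.Injective α)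
    (hnorm : ∀ i, v i ^ (q + 1) * ∏ j ∈ Finset.univ.erase i, (α i - α j) = 1)
    {P : F[X]} (hP : P.degree < n) :
    ∑ i, v i ^ (q + 1) * P.eval (α i) = P.coeff (n - 1) := by
  have h := Lagrange.coeff_eq_sum (s := Finset.univ) (v := α) hα.injOn (P := P)
    (by simpa using hP)
  rw [Finset.card_univ, Fintype.card_fin] at h
  rw [h]
  refine Finset.sum_congr rfl fun i _ => ?_
  rw [eq_inv_of_mul_eq_one_left (hnorm i), div_eq_mul_inv, mul_comm]

lemma mem_degreeLT_succ_iff {k : ℕ} {f : F[X]} :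
    f ∈ degreeLT F (k + 1) ↔ f.natDegree ≤ k := by
  rw [degreeLT_succ_eq_degreeLE, mem_degreeLE, natDegree_le_iff_degree_le]

lemma extMap_hermitian {q k : ℕ} {α v : Fin n → F} {a : F} (hα : Function.Injective α)
    (hnorm : ∀ i, v i ^ (q + 1) * ∏ j ∈ Finset.univ.erase i, (α i - α j) = 1)
    (hn : k * (q + 1) + 1 = n) (ha : a ^ (q + 1) = -1)
    {f g : F[X]} (hf : f.natDegree ≤ k) (hg : g.natDegree ≤ k) :
    ∑ i, extMap k α v a f i * extMap k α v a g i ^ q = 0 := by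
  have hgq : (g ^ q).natDegree ≤ q * k := natDegree_pow_le_of_le q hg
  have hdeg : (f * g ^ q).natDegree ≤ k + q * k := natDegree_mul_le_of_le hf hgq
  have hn1 : n - 1 = k + q * k := by rw [← hn]; simp; ring
  have hP : (f * g ^ q).degree < n := by
    refine lt_of_le_of_lt degree_le_natDegree ?_
    have : k + q * k < n := by rw [← hn]; nlinarith
    exact_mod_cast lt_of_le_of_lt hdeg this
  have hsum := sum_weight_mul_eval hα hnorm hP
  rw [hn1, coeff_mul_add_eq_of_natDegree_le hf hgq,
    coeff_pow_of_natDegree_le hg] at hsum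
  have hfirst : ∑ i, v i * f.eval (α i) * (v i * g.eval (α i)) ^ q
      = f.coeff k * g.coeff k ^ q := by
    rw [← hsum]
    refine Finset.sum_congr rfl fun i _ => ?_
    rw [eval_mul, eval_pow]
    ring
  simp only [extMap_apply, Fin.sum_univ_castSucc, Fin.snoc_castSucc, Fin.snoc_last]
  rw [hfirst]
  linear_combination f.coeff k * g.coeff k ^ q * ha

end

/-- First case of the embedding lemma: if `k(q+1) = n−1` and `a^{q+1} = −1`, then the
extension of the MDS Hermitian self-orthogonal GRS code by the extra row and column is
an MDS Hermitian self-orthogonal `[n+1, k+1]_{q²}` code. -/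
theorem stmt3 (q : ℕ) (hq : IsPrimePow q)
    (F : Type*) [Field F] [Fintype F] (hF : Fintype.card F = q ^ 2)
    (n : ℕ) (α : Fin n → F) (hα : Function.Injective α)
    (v : Fin n → F) (hv : ∀ i, v i ≠ 0)
    (hnorm : ∀ i, v i ^ (q + 1) * ∏ j ∈ Finset.univ.erase i, (α i - α j) = 1)
    (k : ℕ) (hk1 : 1 ≤ k) (hk2 : k * (q + 1) = n - 1)
    (hCk : Module.finrank F (evalCode k α v) = k ∧
      IsHermSelfOrth q (evalCode k α v) ∧
      MinDistEq (evalCode k α v) (n - k + 1))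
    (a : F) (ha : a ^ (q + 1) = -1) :
    Module.finrank F (extCode k α v a) = k + 1 ∧
    IsHermSelfOrth q (extCode k α v a) ∧
    MinDistEq (extCode k α v a) ((n + 1) - (k + 1) + 1) := by
  obtain ⟨-, -, -, c₀, hc₀, hc₀0, hc₀w⟩ := hCk
  have hkq : k ≤ k * (q + 1) := Nat.le_mul_of_pos_right k q.succ_pos
  have hn : k * (q + 1) + 1 = n := by omega
  have ha0 : a ≠ 0 := by
    rintro rfl
    simp at ha
  have hker : ∀ f ∈ Polynomial.degreeLT F (k + 1), extMap k α v a f = 0 → f = 0 := by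
    intro f hf h0
    by_contra hne
    have h := le_weight_extMap hα hv ha0 hne (mem_degreeLT_succ_iff.mp hf)
    simp only [h0, Pi.zero_apply, ne_eq, not_true_eq_false, Set.ofPred_false, Set.ncard_empty] at h
    omega
  rw [extCode_eq_map]
  refine ⟨?_, ?_, ?_, ?_⟩
  · rw [← LinearMap.range_domRestrict, LinearMap.finrank_range_of_inj,
      (Polynomial.degreeLTEquiv F (k + 1)).finrank_eq, Module.finrank_fin_fun]
    rw [← LinearMap.ker_eq_bot, LinearMap.ker_eq_bot']
    intro f h0
    exact Subtype.ext (hker f f.2 h0)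
  · rintro _ ⟨f, hf, rfl⟩ _ ⟨g, hg, rfl⟩
    exact extMap_hermitian hα hnorm hn ha (mem_degreeLT_succ_iff.mp hf)
      (mem_degreeLT_succ_iff.mp hg)
  · rintro _ ⟨f, hf, rfl⟩ hne
    have hf0 : f ≠ 0 := by
      rintro rfl
      exact hne (map_zero _)
    have h := le_weight_extMap hα hv ha0 hf0 (mem_degreeLT_succ_iff.mp hf)
    omega
  · obtain ⟨f, hf, rfl⟩ := hc₀
    have hcoeff : f.coeff k = 0 :=
      Polynomial.coeff_eq_zero_of_degree_lt (Polynomial.mem_degreeLT.mp hf)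
    have hw : Set.ncard {i | extMap k α v a f i ≠ 0} = n + 1 - (k + 1) + 1 := by
      classical
      rw [extMap_apply, ncard_support_snoc, hcoeff, mul_zero, if_neg (by simp), add_zero]
      refine hc₀w.trans ?_
      omega
    refine ⟨_, ⟨f, Polynomial.degreeLT_mono (Nat.le_succ k) hf, rfl⟩, fun h0 => ?_, hw⟩
    simp [h0] at hw
end

section
/- Let q be a prime power, let t be a positive divisor of q+1, set n = t(q−1)+1, and suppose k'' = ⌊n/(2t)⌋ ≥ 1. Then there exists an MDS Hermitian self-orthogonal [n, k'']_{q²} code. -/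
/-!
The code is a generalized Reed–Solomon code of degree `< k` with evaluation points `0` and the
`t(q-1)`-th roots of unity; the column multipliers are `1` at the roots of unity and `w` at `0`,
where `w ^ (q+1) = t`.

Any such code is MDS, by counting roots of polynomials of degree `< k ≤ n`
(`grs_finrank`, `grs_minDist`). For self-orthogonality, by semilinearity it is enough to check the
moments `∑ v ^ (q+1) * α ^ (a + q b)` with `a, b < k` (`grs_selfOrth`). The power sum of the roots
of unity vanishes unless `t(q-1) ∣ a + q b`; this forces `q-1 ∣ a + b`, and since `2k ≤ q` gives
`a + b ≤ q - 2`, only `a = b = 0` remains. There the moment is `t(q-1) + w ^ (q+1) = t q = 0`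
in `F`. The element `w` exists because `t` is a nonzero element of `𝔽_q` (it divides `q+1`, which
is `1` in `F`), and the norm `x ↦ x ^ (q+1)` is onto `𝔽_qˣ` (`exists_root_and_norm`).
-/

open scoped BigOperators

open Polynomial

/-- The weighted evaluation map `p ↦ (vᵢ p(αᵢ))ᵢ`, whose values on polynomials of degree `< k` form
the generalized Reed–Solomon code. -/
noncomputable def grsMap {F : Type*} [Field F] {n : ℕ} (α v : Fin n → F) :
    F[X] →ₗ[F] (Fin n → F) :=
  LinearMap.pi fun i => v i • Polynomial.leval (α i)

/-- The generalized Reed–Solomon code of polynomials of degree `< k` with evaluation points `α` and column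
multipliers `v`. -/
noncomputable def grsCode {F : Type*} [Field F] {n : ℕ} (α v : Fin n → F) (k : ℕ) :
    Submodule F (Fin n → F) :=
  (degreeLT F k).map (grsMap α v)

lemma grsMap_apply {F : Type*} [Field F] {n : ℕ} (α v : Fin n → F) (p : F[X]) (i : Fin n) :
    grsMap α v p i = v i * p.eval (α i) := by
  simp [grsMap, Polynomial.leval]

/-- A nonzero polynomial of degree `< k` vanishes at fewer than `k` of the points. -/
lemma card_zeros_lt {F : Type*} [Field F] {n k : ℕ} {α : Fin n → F}
    (hα : Function.Injective α) {p : F[X]} (hp : p ∈ degreeLT F k) (h0 : p ≠ 0) :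
    Set.ncard {i | p.eval (α i) = 0} < k := by
  classical
  have h1 : Set.ncard {i | p.eval (α i) = 0} ≤ p.roots.toFinset.card := by
    rw [← Set.ncard_coe_finset]
    refine Set.ncard_le_ncard_of_injOn α ?_ hα.injOn (Finset.finite_toSet _)
    intro i hi
    simpa [h0] using hi
  have h2 := Multiset.toFinset_card_le p.roots
  have h3 := p.card_roots'
  have h4 : p.natDegree < k := by
    rw [mem_degreeLT] at hp
    exact (natDegree_lt_iff_degree_lt h0).2 hp
  omega

lemma ncard_support_add {F : Type*} [Field F] {n : ℕ} (c : Fin n → F) :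
    Set.ncard {i | c i = 0} + Set.ncard {i | c i ≠ 0} = n := by
  have := Set.ncard_add_ncard_compl {i | c i = 0}
  simpa [Set.compl_ofPred] using this

lemma grs_zeros {F : Type*} [Field F] {n : ℕ} {α v : Fin n → F} (hv : ∀ i, v i ≠ 0) (p : F[X]) :
    {i | grsMap α v p i = 0} = {i | p.eval (α i) = 0} := by
  ext i
  simp [grsMap_apply, hv i]

lemma grs_finrank {F : Type*} [Field F] {n k : ℕ} {α v : Fin n → F}
    (hα : Function.Injective α) (hv : ∀ i, v i ≠ 0) (hkn : k ≤ n) :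
    Module.finrank F (grsCode α v k) = k := by
  have hinj : Function.Injective ((grsMap α v).domRestrict (degreeLT F k)) := by
    rw [injective_iff_map_eq_zero]
    rintro ⟨p, hp⟩ h
    by_contra hne
    have h0 : p ≠ 0 := fun h => hne (by simp [h])
    have h1 := card_zeros_lt hα hp h0
    rw [← grs_zeros hv] at h1
    have h2 : grsMap α v p = 0 := h
    simp [h2] at h1
    omega
  have h1 := LinearMap.finrank_range_of_inj hinj
  rw [LinearMap.range_domRestrict] at h1
  rw [grsCode, h1, (degreeLTEquiv F k).finrank_eq]
  simp

/-- The Singleton bound is attained: a codeword of weight exactly `n - k + 1` comes from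
`∏ (X - αᵢ)` over any `k - 1` points. -/
lemma grs_minDist {F : Type*} [Field F] {n k : ℕ} {α v : Fin n → F}
    (hα : Function.Injective α) (hv : ∀ i, v i ≠ 0) (hk : 1 ≤ k) (hkn : k ≤ n) :
    MinDistEq (grsCode α v k) (n - k + 1) := by
  constructor
  · rintro _ ⟨p, hp, rfl⟩ hne
    have h0 : p ≠ 0 := fun h => hne (by simp [h])
    have h1 := card_zeros_lt hα hp h0
    rw [← grs_zeros hv] at h1
    have h2 := ncard_support_add (grsMap α v p)
    omega
  · obtain ⟨s, -, hs⟩ := Finset.exists_subset_card_eq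
      (s := (Finset.univ : Finset (Fin n))) (n := k - 1) (by simp; omega)
    let p : F[X] := ∏ i ∈ s, (X - C (α i))
    have hz : {i | grsMap α v p i = 0} = (s : Set (Fin n)) := by
      rw [grs_zeros hv]
      ext i
      simp only [p, eval_prod, Set.mem_ofPred_eq, Finset.prod_eq_zero_iff, eval_sub, eval_X, eval_C,
        sub_eq_zero, Finset.mem_coe]
      constructor
      · rintro ⟨j, hj, h⟩
        rwa [hα h]
      · exact fun h => ⟨i, h, rfl⟩
    have hw : Set.ncard {i | grsMap α v p i ≠ 0} = n - k + 1 := by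
      have h2 := ncard_support_add (grsMap α v p)
      rw [hz, Set.ncard_coe_finset, hs] at h2
      omega
    refine ⟨grsMap α v p, ⟨p, ?_, rfl⟩, ?_, hw⟩
    · have hd : p.degree = (k - 1 : ℕ) := by
        simp [p, degree_prod, hs]
      rw [SetLike.mem_coe, mem_degreeLT, hd]
      exact_mod_cast (by omega : k - 1 < k)
    · intro h
      simp [h] at hw

/-- Self-orthogonality of the code reduces to the vanishing of the moments of degree `a + q b`. -/
lemma grs_selfOrth {F : Type*} [Field F] {n k p r : ℕ} [Fact p.Prime] [CharP F p]
    {α v : Fin n → F}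
    (h : ∀ a < k, ∀ b < k, ∑ i, v i ^ (p ^ r + 1) * α i ^ (a + p ^ r * b) = 0) :
    IsHermSelfOrth (p ^ r) (grsCode α v k) := by
  rintro _ ⟨f, hf, rfl⟩ _ ⟨g, hg, rfl⟩
  have hev : ∀ f ∈ degreeLT F k, ∀ x : F,
      f.eval x = ∑ a ∈ Finset.range k, f.coeff a * x ^ a := by
    intro f hf x
    by_cases h0 : f = 0
    · simp [h0]
    · rw [mem_degreeLT] at hf
      exact eval_eq_sum_range' ((natDegree_lt_iff_degree_lt h0).2 hf) x
  calc ∑ i, grsMap α v f i * (grsMap α v g i) ^ (p ^ r)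
      = ∑ i, ∑ a ∈ Finset.range k, ∑ b ∈ Finset.range k, f.coeff a * g.coeff b ^ (p ^ r) *
          (v i ^ (p ^ r + 1) * α i ^ (a + p ^ r * b)) := by
        refine Finset.sum_congr rfl fun i _ => ?_
        rw [grsMap_apply, grsMap_apply, hev f hf, hev g hg, mul_pow, sum_pow_char_pow,
          mul_mul_mul_comm, Finset.sum_mul_sum, Finset.mul_sum]
        refine Finset.sum_congr rfl fun a _ => ?_
        rw [Finset.mul_sum]
        refine Finset.sum_congr rfl fun b _ => ?_
        rw [mul_pow, ← pow_mul, mul_comm b, pow_add, pow_add]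
        ring
    _ = 0 := by
        rw [Finset.sum_comm]
        refine Finset.sum_eq_zero fun a ha => ?_
        rw [Finset.sum_comm]
        refine Finset.sum_eq_zero fun b hb => ?_
        rw [← Finset.mul_sum, h a (Finset.mem_range.1 ha) b (Finset.mem_range.1 hb), mul_zero]

/-- Both elements are powers of a generator `g` of `Fˣ`: `ζ = g ^ ((q+1)/t)`, and
`t = g ^ j` with `t ^ (q-1) = 1` forces `q + 1 ∣ j`, so that `w = g ^ (j/(q+1))`. -/
lemma exists_root_and_norm {F : Type*} [Field F] [Fintype F] {q t : ℕ} (hq : 2 ≤ q)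
    (htq : t ∣ q + 1) (hF : Fintype.card F = q ^ 2) (hq0 : (q : F) = 0)
    (htF : (t : F) ^ q = t) :
    ∃ ζ w : F, IsPrimitiveRoot ζ (t * (q - 1)) ∧ w ≠ 0 ∧ w ^ (q + 1) = t := by
  obtain ⟨g, hg⟩ := IsCyclic.exists_ofOrder_eq_natCard (α := Fˣ)
  have hcard : Nat.card Fˣ = (q + 1) * (q - 1) := by
    rw [Nat.card_units, Nat.card_eq_fintype_card, hF]
    simpa using Nat.sq_sub_sq q 1
  rw [hcard] at hg
  have hpos : 0 < (q + 1) * (q - 1) := Nat.mul_pos (by omega) (by omega)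
  have hgp : IsPrimitiveRoot g ((q + 1) * (q - 1)) := hg ▸ IsPrimitiveRoot.orderOf g
  have ht0 : (t : F) ≠ 0 := by
    obtain ⟨s, hs⟩ := htq
    intro h
    have := congrArg (Nat.cast : ℕ → F) hs
    simp [hq0, h] at this
  have hζ : ∃ ζ : F, IsPrimitiveRoot ζ (t * (q - 1)) := by
    obtain ⟨s, hs⟩ := htq
    refine ⟨((g ^ s : Fˣ) : F), IsPrimitiveRoot.coe_units_iff.2 (hgp.pow hpos ?_)⟩
    rw [hs]; ring
  obtain ⟨ζ, hζ⟩ := hζ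
  have hmem : Units.mk0 (t : F) ht0 ∈ Subgroup.zpowers g := by
    have htop : Subgroup.zpowers g = ⊤ :=
      Subgroup.eq_top_of_card_eq _ (by rw [Nat.card_zpowers, hg, hcard])
    rw [htop]; trivial
  obtain ⟨j, hj⟩ := (mem_powers_iff_mem_zpowers).2 hmem
  have hj1 : g ^ (j * (q - 1)) = 1 := by
    have hj' : g ^ j = Units.mk0 (t : F) ht0 := hj
    rw [pow_mul, hj']
    ext
    have : (t : F) ^ (q - 1) * t = 1 * t := by
      rw [← pow_succ, Nat.sub_add_cancel (by omega), htF, one_mul]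
    simpa using mul_right_cancel₀ ht0 this
  have hdvd := (hgp.pow_eq_one_iff_dvd _).1 hj1
  obtain ⟨l, hl⟩ := Nat.dvd_of_mul_dvd_mul_right (by omega) hdvd
  refine ⟨ζ, ((g ^ l : Fˣ) : F), hζ, Units.ne_zero _, ?_⟩
  have hj' : g ^ j = Units.mk0 (t : F) ht0 := hj
  rw [← Units.val_pow_eq_pow_val, ← pow_mul, mul_comm l, ← hl, hj']
  rfl

/-- For `t ∣ q+1`, `n = t(q−1)+1` and `k'' = ⌊n/(2t)⌋ ≥ 1`, there exists an MDS
Hermitian self-orthogonal `[n, k'']_{q²}` code. -/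
theorem stmt6 (q t : ℕ) (hq : IsPrimePow q) (ht : 0 < t) (htq : t ∣ q + 1)
    (n : ℕ) (hn : n = t * (q - 1) + 1)
    (k : ℕ) (hk : k = n / (2 * t)) (hk1 : 1 ≤ k)
    (F : Type*) [Field F] [Fintype F] (hF : Fintype.card F = q ^ 2) :
    ∃ C : Submodule F (Fin n → F),
      Module.finrank F C = k ∧ IsHermSelfOrth q C ∧
      MinDistEq C (n - k + 1) := by
  obtain ⟨p, r, hp, hr, rfl⟩ := hq
  have hpp : p.Prime := hp.nat_prime
  have : Fact p.Prime := ⟨hpp⟩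
  have : CharP F p := by
    obtain ⟨p', hc⟩ := CharP.exists F
    obtain ⟨e, hp', he⟩ := FiniteField.card F p'
    rw [hF, ← pow_mul] at he
    have h1 : p ∣ p' ^ (e : ℕ) := he ▸ dvd_pow_self p (by omega)
    rw [(Nat.prime_dvd_prime_iff_eq hpp hp').1 (hpp.dvd_of_dvd_pow h1)]
    exact hc
  have hq2 : 2 ≤ p ^ r := hpp.two_le.trans (Nat.le_self_pow hr.ne' p)
  have hq0 : ((p ^ r : ℕ) : F) = 0 := by
    simp [hr.ne']
  have htF : (t : F) ^ (p ^ r) = t := by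
    rw [← iterateFrobenius_def, map_natCast]
  obtain ⟨ζ, w, hζ, hw, hwt⟩ := exists_root_and_norm hq2 htq hF hq0 htF
  obtain ⟨Q, hQ⟩ : ∃ Q, p ^ r = Q + 1 := ⟨p ^ r - 1, by omega⟩
  have hQ1 : p ^ r - 1 = Q := by omega
  rw [hQ1] at hn hζ
  have hQpos : 1 ≤ Q := by omega
  subst hn
  -- `2 k t ≤ n = t Q + 1 ≤ t (Q + 1)`
  have hk2 : 2 * k ≤ Q + 1 := by
    have h1 : k * (2 * t) ≤ t * Q + 1 := hk ▸ Nat.div_mul_le_self _ _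
    refine Nat.le_of_mul_le_mul_left (c := t) ?_ ht
    nlinarith
  have hkn : k ≤ t * Q + 1 := hk ▸ Nat.div_le_self _ _
  let α : Fin (t * Q + 1) → F := Fin.cons 0 fun i => ζ ^ (i : ℕ)
  let v : Fin (t * Q + 1) → F := Fin.cons w fun _ => 1
  have hm : t * Q ≠ 0 := (Nat.mul_pos ht hQpos).ne'
  have hα : Function.Injective α := by
    refine Fin.cons_injective_iff.2 ⟨?_, ?_⟩
    · rintro ⟨i, hi⟩
      exact pow_ne_zero _ (hζ.ne_zero hm) hi
    · intro i j hij
      exact Fin.ext (hζ.pow_inj i.2 j.2 hij)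
  have hv : ∀ i, v i ≠ 0 := by
    intro i
    refine Fin.cases ?_ (fun i => ?_) i
    · simpa [v] using hw
    · simp [v]
  refine ⟨grsCode α v k, grs_finrank hα hv hkn, grs_selfOrth ?_, grs_minDist hα hv hk1 hkn⟩
  intro a ha b hb
  rw [Fin.sum_univ_succ]
  simp only [α, v, Fin.cons_zero, Fin.cons_succ, one_pow, one_mul, hwt]
  by_cases hab : a + p ^ r * b = 0
  · have h0 : ((Q : F) + 1) = 0 := by
      rw [hQ] at hq0
      exact_mod_cast hq0
    -- the moment of degree `0` is `t + t (q - 1) = t q`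
    simp only [hab, pow_zero, mul_one, Finset.sum_const, Finset.card_univ, Fintype.card_fin,
      nsmul_eq_mul, Nat.cast_mul]
    linear_combination (t : F) * h0
  · rw [zero_pow hab, mul_zero, zero_add]
    have hne : ζ ^ (a + p ^ r * b) ≠ 1 := by
      intro h1
      have h2 : Q ∣ a + p ^ r * b := (Dvd.intro_left t rfl).trans ((hζ.pow_eq_one_iff_dvd _).1 h1)
      have h3 : Q ∣ a + b := by
        have h4 : a + p ^ r * b = (a + b) + Q * b := by rw [hQ]; ring
        rw [h4] at h2
        exact (Nat.dvd_add_left (Dvd.intro b rfl)).1 h2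
      have h5 : a + b = 0 := Nat.eq_zero_of_dvd_of_lt h3 (by omega)
      apply hab
      rw [show a = 0 by omega, show b = 0 by omega]
      simp
    have hgeom := mul_geom_sum (ζ ^ (a + p ^ r * b)) (t * Q)
    rw [← pow_mul, mul_comm (a + p ^ r * b), pow_mul, hζ.pow_eq_one, one_pow, sub_self] at hgeom
    rw [← (mul_eq_zero.1 hgeom).resolve_left (sub_ne_zero.2 hne), Finset.sum_range]
    refine Finset.sum_congr rfl fun i _ => ?_
    rw [← pow_mul, ← pow_mul, mul_comm]
end

section
/- Let q be a prime power, let n be a positive divisor of q²−1, set n₂ = n/gcd(n, q+1), and let t be an integer with 1 ≤ t ≤ (q−1)/n₂ − 1. Then for every integer k with 1 ≤ k ≤ ⌊((t+1)n + q)/(q+1)⌋ there exists an MDS Hermitian self-orthogonal [(t+1)n + 1, k]_{q²} code. -/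
/-!
The code is a generalized Reed–Solomon code `{(vᵢ f(xᵢ))ᵢ : deg f < k}`. Its Hermitian form is
`∑ᵢ vᵢ^(q+1) (f g^q)(xᵢ)`, and `f g^q` has degree at most `(q+1)(k-1) ≤ N-2`, where `N` is the
length. Lagrange interpolation gives `∑ᵢ h(xᵢ) / ∏_{j≠i} (xᵢ - xⱼ) = 0` for every `h` of degree at
most `N-2`, so self-orthogonality follows once `vᵢ^(q+1) = 1 / ∏_{j≠i} (xᵢ - xⱼ)`. Since the norm
`v ↦ v^(q+1)` maps onto `𝔽_q^*` (`exists_pow_succ_eq_of_pow_eq_self`), this is solvable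
as soon as all the products `∏_{j≠i} (xᵢ - xⱼ)` lie in `𝔽_q` (`exists_code_of_points`).

For the points, put `e = (q+1)/gcd(n,q+1)` and `c = (q-1)/n₂`, so that `q²-1 = n e c`, and let `β`
have order `n c`. Then `0` and the `t+1 ≤ c` cosets `β^s U_n`, `s ≤ t`, where `U_n = ⟨β^c⟩`, form
the zero set of `P = X · Q(X^n)` with `Q = ∏_s (X - β^(ns))`. The roots `β^(ns)` lie in `𝔽_q`, so
`Q` has coefficients in `𝔽_q`, and for a zero `x` of `P` with `y = x^n` the product in question is
`P'(x) = Q(y) + n y Q'(y) ∈ 𝔽_q` (`map_prod_sub_eq`).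
-/

open scoped BigOperators

/-- The norm `v ↦ v^(q+1)` from `𝔽_{q²}^*` is onto `𝔽_q^* = {u ≠ 0 : u^q = u}`. -/
lemma exists_pow_succ_eq_of_pow_eq_self {F : Type*} [Field F] [Fintype F] {q : ℕ} (hq : 2 ≤ q)
    (hF : Fintype.card F = q ^ 2) {u : F} (hu : u ≠ 0) (huq : u ^ q = u) :
    ∃ v : F, v ≠ 0 ∧ v ^ (q + 1) = u := by
  classical
  obtain ⟨ζ, hζ⟩ := IsCyclic.exists_monoid_generator (α := Fˣ)
  have hcard : orderOf ζ = (q + 1) * (q - 1) := by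
    rw [orderOf_eq_card_of_forall_mem_powers hζ, Nat.card_eq_fintype_card, Fintype.card_units, hF]
    simpa using Nat.sq_sub_sq q 1
  obtain ⟨j, hj⟩ := Submonoid.mem_powers_iff _ _ |>.1 (hζ (Units.mk0 u hu))
  have h1 : (Units.mk0 u hu) ^ (q - 1) = 1 := by
    ext
    have : u ^ (q - 1) * u = 1 * u := by
      rw [← pow_succ, Nat.sub_add_cancel (by omega), huq, one_mul]
    simpa using mul_right_cancel₀ hu this
  rw [← hj, ← pow_mul] at h1
  have h2 := orderOf_dvd_of_pow_eq_one h1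
  rw [hcard] at h2
  obtain ⟨l, rfl⟩ := Nat.dvd_of_mul_dvd_mul_right (by omega) h2
  refine ⟨((ζ ^ l : Fˣ) : F), Units.ne_zero _, ?_⟩
  rw [← Units.val_pow_eq_pow_val, ← pow_mul, mul_comm, hj, Units.val_mk0]

open Polynomial in
/-- Evaluation points whose difference products all lie in `𝔽_q` carry an MDS Hermitian
self-orthogonal code of each dimension `k` with `(q+1)(k-1) ≤ N-2`. -/
lemma exists_code_of_points {F : Type*} [Field F] [Fintype F] {q N k : ℕ} (hq : 2 ≤ q)
    (hF : Fintype.card F = q ^ 2) (x : Fin N → F) (hx : Function.Injective x)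
    (hprod : ∀ i, (∏ j ∈ Finset.univ.erase i, (x i - x j)) ^ q =
      ∏ j ∈ Finset.univ.erase i, (x i - x j))
    (hk1 : 1 ≤ k) (hk : (q + 1) * (k - 1) + 2 ≤ N) :
    ∃ C : Submodule F (Fin N → F),
      Module.finrank F C = k ∧ IsHermSelfOrth q C ∧ MinDistEq C (N - k + 1) := by
  classical
  have hkN : k < N := by nlinarith [Nat.sub_add_cancel hk1]
  have hne : ∀ i, ∏ j ∈ Finset.univ.erase i, (x i - x j) ≠ 0 := by
    intro i
    refine Finset.prod_ne_zero_iff.2 fun j hj => sub_ne_zero.2 fun h => ?_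
    exact (Finset.mem_erase.1 hj).1 (hx h).symm
  choose v hv0 hv using fun i => exists_pow_succ_eq_of_pow_eq_self hq hF (inv_ne_zero (hne i))
    (by rw [inv_pow, hprod i])
  let ev : F[X] →ₗ[F] (Fin N → F) :=
    { toFun := fun f i => v i * f.eval (x i)
      map_add' := fun f g => by ext i; simp [mul_add]
      map_smul' := fun a f => by ext i; simp; ring }
  have hev : ∀ f i, ev f i = v i * f.eval (x i) := fun f i => rfl
  -- the zero positions of a codeword are the roots of its polynomial among the points
  have hsupp : ∀ f, Set.ncard {i | ev f i ≠ 0} +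
      (Finset.univ.filter fun i => f.eval (x i) = 0).card = N := by
    intro f
    have : {i | ev f i ≠ 0} = ((Finset.univ.filter fun i => ¬ f.eval (x i) = 0 : Finset _) :
        Set (Fin N)) := by
      ext i; simp [hev, hv0 i]
    rw [this, Set.ncard_coe_finset, add_comm, Finset.card_filter_add_card_filter_not]
    simp
  have hroots : ∀ f : F[X], f ≠ 0 → f.degree < k →
      (Finset.univ.filter fun i => f.eval (x i) = 0).card < k := by
    intro f hf hd
    by_contra! h
    refine hf (eq_zero_of_degree_lt_of_eval_index_eq_zero
      (Finset.univ.filter fun i => f.eval (x i) = 0) hx.injOn ?_ ?_)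
    · exact lt_of_lt_of_le hd (by exact_mod_cast h)
    · intro i hi; exact (Finset.mem_filter.1 hi).2
  have hinj : Function.Injective (ev.domRestrict (degreeLT F k)) := by
    rw [← LinearMap.ker_eq_bot, LinearMap.ker_eq_bot']
    rintro ⟨f, hf⟩ h0
    by_contra hne0
    have hf0 : f ≠ 0 := fun h => hne0 (Subtype.ext h)
    have h1 := hroots f hf0 (mem_degreeLT.1 hf)
    have h2 := hsupp f
    have h3 : ev f = 0 := h0
    simp only [h3, Pi.zero_apply, ne_eq, not_true_eq_false, Set.ofPred_false, Set.ncard_empty] at h2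
    omega
  have hmem : ∀ c, c ∈ LinearMap.range (ev.domRestrict (degreeLT F k)) ↔
      ∃ f : F[X], f.degree < k ∧ ev f = c := by
    intro c
    constructor
    · rintro ⟨⟨f, hf⟩, rfl⟩
      exact ⟨f, mem_degreeLT.1 hf, rfl⟩
    · rintro ⟨f, hf, rfl⟩
      exact ⟨⟨f, mem_degreeLT.2 hf⟩, rfl⟩
  refine ⟨LinearMap.range (ev.domRestrict (degreeLT F k)), ?_, ?_, ?_, ?_⟩
  · rw [LinearMap.finrank_range_of_inj hinj, (degreeLTEquiv F k).finrank_eq]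
    simp
  · intro c hc c' hc'
    obtain ⟨f, hf, rfl⟩ := (hmem c).1 hc
    obtain ⟨g, hg, rfl⟩ := (hmem c').1 hc'
    have hdeg : (f * g ^ q).natDegree ≤ (q + 1) * (k - 1) := by
      have hf' : f.natDegree ≤ k - 1 := by
        have := (degree_lt_iff_coeff_zero _ _).1 hf
        exact natDegree_le_iff_coeff_eq_zero.2 fun m hm => this m (by omega)
      have hg' : g.natDegree ≤ k - 1 := by
        have := (degree_lt_iff_coeff_zero _ _).1 hg
        exact natDegree_le_iff_coeff_eq_zero.2 fun m hm => this m (by omega)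
      calc (f * g ^ q).natDegree ≤ f.natDegree + q * g.natDegree :=
            natDegree_mul_le.trans (Nat.add_le_add_left natDegree_pow_le _)
        _ ≤ (k - 1) + q * (k - 1) := by gcongr
        _ = _ := by ring
    have h0 : (f * g ^ q).coeff (N - 1) = 0 := coeff_eq_zero_of_natDegree_lt (by omega)
    have h1 := Lagrange.coeff_eq_sum (s := (Finset.univ : Finset (Fin N))) (v := x) hx.injOn
      (P := f * g ^ q) (lt_of_le_of_lt degree_le_natDegree (by
        rw [Finset.card_univ, Fintype.card_fin]; exact_mod_cast (by omega)))
    rw [Finset.card_univ, Fintype.card_fin, h0] at h1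
    rw [h1]
    refine Finset.sum_congr rfl fun i _ => ?_
    rw [hev, hev, div_eq_mul_inv, ← hv i, eval_mul, eval_pow]
    ring
  · intro c hc hc0
    obtain ⟨f, hf, rfl⟩ := (hmem c).1 hc
    have hf0 : f ≠ 0 := by rintro rfl; exact hc0 (map_zero ev)
    have h1 := hroots f hf0 hf
    have h2 := hsupp f
    omega
  · obtain ⟨T, -, hT⟩ := Finset.exists_subset_card_eq
      (s := (Finset.univ : Finset (Fin N))) (n := k - 1) (by simp; omega)
    have hd : (Lagrange.nodal T x).degree < k := by
      rw [Lagrange.degree_nodal, hT]; exact_mod_cast (by omega)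
    have hz : (Finset.univ.filter fun i => (Lagrange.nodal T x).eval (x i) = 0) = T := by
      ext i
      simp [Lagrange.eval_nodal, Finset.prod_eq_zero_iff, sub_eq_zero, hx.eq_iff]
    have h2 := hsupp (Lagrange.nodal T x)
    rw [hz, hT] at h2
    refine ⟨_, (hmem _).2 ⟨_, hd, rfl⟩, ?_, by omega⟩
    intro h0
    simp only [h0, Pi.zero_apply, ne_eq, not_true_eq_false, Set.ofPred_false, Set.ncard_empty] at h2
    omega

open Polynomial in
/-- If the `(t+1)n+1` distinct points `x i` are zeros of `X · ∏_s (X^n - b s)` with all `b s` fixed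
by the endomorphism `φ`, then `φ` fixes every difference product `∏_{j≠i} (xᵢ - xⱼ)`. -/
lemma map_prod_sub_eq {F : Type*} [Field F] {n t : ℕ} (hn : 0 < n) (φ : F →+* F)
    (b : ℕ → F) (hb : ∀ s, φ (b s) = b s)
    (x : Fin ((t + 1) * n + 1) → F) (hx : Function.Injective x)
    (hroot : ∀ i, x i = 0 ∨ ∃ s < t + 1, x i ^ n = b s) (i : Fin ((t + 1) * n + 1)) :
    φ (∏ j ∈ Finset.univ.erase i, (x i - x j)) = ∏ j ∈ Finset.univ.erase i, (x i - x j) := by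
  classical
  set Q : F[X] := Lagrange.nodal (Finset.range (t + 1)) b with hQ
  have hQmap : Q.map φ = Q := by
    simp [hQ, Lagrange.nodal_eq, Polynomial.map_prod, hb]
  have hmonic : (Q.comp (X ^ n)).Monic :=
    Lagrange.nodal_monic.comp (monic_X_pow n) (by simpa using hn.ne')
  have hPmonic : (X * Q.comp (X ^ n)).Monic := monic_X.mul hmonic
  have hPdeg : (X * Q.comp (X ^ n)).natDegree = (t + 1) * n + 1 := by
    rw [monic_X.natDegree_mul hmonic, natDegree_comp, hQ, Lagrange.natDegree_nodal]
    simp [add_comm]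
  have hP : Lagrange.nodal Finset.univ x = X * Q.comp (X ^ n) := by
    refine eq_of_degree_sub_lt_of_eval_index_eq Finset.univ hx.injOn ?_ ?_
    · have h1 : (Lagrange.nodal Finset.univ x).degree = (((t + 1) * n + 1 : ℕ) : WithBot ℕ) := by
        rw [Lagrange.degree_nodal, Finset.card_univ, Fintype.card_fin]
      rw [Finset.card_univ, Fintype.card_fin, ← h1]
      refine degree_sub_lt_left ?_ Lagrange.nodal_ne_zero ?_
      · rw [h1, degree_eq_natDegree hPmonic.ne_zero, hPdeg]
      · rw [Lagrange.nodal_monic.leadingCoeff, hPmonic.leadingCoeff]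
    · intro i _
      rw [Lagrange.eval_nodal_at_node (Finset.mem_univ i)]
      rcases hroot i with h | ⟨s, hs, h⟩
      · simp [h]
      · simp [h, hQ, Lagrange.eval_nodal_at_node (Finset.mem_range.2 hs)]
  have hy : φ (x i ^ n) = x i ^ n := by
    rcases hroot i with h | ⟨s, -, h⟩
    · simp [h, hn.ne']
    · rw [h, hb]
  have hval : ∏ j ∈ Finset.univ.erase i, (x i - x j) =
      Q.eval (x i ^ n) + n * x i ^ n * Q.derivative.eval (x i ^ n) := by
    rw [← Lagrange.eval_nodal, ← Lagrange.eval_nodal_derivative_eval_node_eq (Finset.mem_univ i),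
      hP]
    obtain ⟨m, rfl⟩ := Nat.exists_eq_succ_of_ne_zero hn.ne'
    simp [derivative_comp]
    ring
  have hev : ∀ R : F[X], R.map φ = R → φ (R.eval (x i ^ n)) = R.eval (x i ^ n) := by
    intro R hR
    rw [← eval_map_apply, hR, hy]
  rw [hval, map_add, map_mul, map_mul, map_natCast, hy, hev Q hQmap,
    hev _ (by rw [← derivative_map, hQmap])]

/-- Multi-coset construction: for `n ∣ q²−1`, `n₂ = n/gcd(n,q+1)`,
`1 ≤ t ≤ (q−1)/n₂ − 1` and `1 ≤ k ≤ ⌊((t+1)n+q)/(q+1)⌋`, there exists an MDS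
Hermitian self-orthogonal `[(t+1)n+1, k]_{q²}` code. -/
theorem stmt10 (q n : ℕ) (hq : IsPrimePow q) (hn : 0 < n)
    (hdvd : n ∣ q ^ 2 - 1)
    (t : ℕ) (ht1 : 1 ≤ t) (ht2 : t ≤ (q - 1) / (n / Nat.gcd n (q + 1)) - 1)
    (k : ℕ) (hk1 : 1 ≤ k) (hk2 : k ≤ ((t + 1) * n + q) / (q + 1))
    (F : Type*) [Field F] [Fintype F] (hF : Fintype.card F = q ^ 2) :
    ∃ C : Submodule F (Fin ((t + 1) * n + 1) → F),
      Module.finrank F C = k ∧ IsHermSelfOrth q C ∧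
      MinDistEq C ((t + 1) * n + 1 - k + 1) := by
  classical
  have hq2 : 2 ≤ q := hq.two_le
  have hsq : q ^ 2 - 1 = (q + 1) * (q - 1) := by simpa using Nat.sq_sub_sq q 1
  obtain ⟨p, r, hp, hr, hpr⟩ := (isPrimePow_nat_iff q).1 hq
  have : Fact p.Prime := ⟨hp⟩
  have : CharP F p := charP_of_card_eq_prime_pow (f := r * 2) (by rw [hF, ← hpr, pow_mul])
  -- the factorization `q² - 1 = n * e * c`
  obtain ⟨e, n₂, c, he, hqe, hqc, hc⟩ : ∃ e n₂ c : ℕ, 0 < e ∧ n * e = n₂ * (q + 1) ∧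
      q - 1 = n₂ * c ∧ t + 1 ≤ c := by
    have hg : 0 < n.gcd (q + 1) := Nat.gcd_pos_of_pos_left _ hn
    obtain ⟨e, he⟩ := Nat.gcd_dvd_right n (q + 1)
    obtain ⟨n₂, hn₂⟩ := Nat.gcd_dvd_left n (q + 1)
    have hcop := Nat.coprime_div_gcd_div_gcd hg
    generalize n.gcd (q + 1) = g at *
    rw [he, hn₂, Nat.mul_div_cancel_left _ hg, Nat.mul_div_cancel_left _ hg] at hcop
    rw [hn₂, Nat.mul_div_cancel_left _ hg] at ht2
    rw [hsq, he, hn₂, mul_assoc] at hdvd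
    obtain ⟨c, hc⟩ := hcop.dvd_of_dvd_mul_left (Nat.dvd_of_mul_dvd_mul_left hg hdvd)
    have hn₂0 : 0 < n₂ := Nat.pos_of_ne_zero (by rintro rfl; omega)
    refine ⟨e, n₂, c, Nat.pos_of_ne_zero (by rintro rfl; omega), ?_, hc, ?_⟩
    · rw [he, hn₂]; ring
    · rw [hc, Nat.mul_div_cancel_left _ hn₂0] at ht2; omega
  have hfac : q ^ 2 - 1 = e * (n * c) := by
    rw [hsq, hqc]; rw [← mul_assoc, ← mul_assoc, mul_comm e, hqe, mul_comm (q + 1)]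
  obtain ⟨ζ, hζ⟩ := IsCyclic.exists_monoid_generator (α := Fˣ)
  have hζo : orderOf ζ = e * (n * c) := by
    rw [orderOf_eq_card_of_forall_mem_powers hζ, Nat.card_eq_fintype_card, Fintype.card_units, hF,
      hfac]
  set β : Fˣ := ζ ^ e with hβ
  have hβo : orderOf β = n * c := by
    rw [hβ, orderOf_pow_of_dvd he.ne' (by rw [hζo]; exact dvd_mul_right _ _), hζo,
      Nat.mul_div_cancel_left _ he]
  have hβfix : ((β : F) ^ n) ^ q = (β : F) ^ n := by
    have h1 : β ^ (n * (q - 1)) = 1 := by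
      rw [hqc, show n * (n₂ * c) = n * c * n₂ by ring, pow_mul, ← hβo, pow_orderOf_eq_one, one_pow]
    have h2 : (β : F) ^ (n * (q - 1)) = 1 := by
      rw [← Units.val_pow_eq_pow_val, h1, Units.val_one]
    rw [← pow_mul, show n * q = n * (q - 1) + n by
      conv_lhs => rw [← Nat.sub_add_cancel (show 1 ≤ q by omega)]
      ring, pow_add, h2, one_mul]
  -- the nonzero points `β^(s + c*l)`, with `s ≤ t` and `l < n` read off from `j = s + (t+1)*l`
  let ex : Fin ((t + 1) * n) → ℕ := fun j => j % (t + 1) + c * (j / (t + 1))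
  have hexlt : ∀ j, ex j < n * c := by
    intro j
    have h1 : (j : ℕ) % (t + 1) < c := (Nat.mod_lt _ (by omega)).trans_le hc
    have h2 : (j : ℕ) / (t + 1) < n := Nat.div_lt_of_lt_mul j.2
    have h3 : c * ((j : ℕ) / (t + 1) + 1) ≤ c * n := Nat.mul_le_mul_left _ h2
    simp only [ex]
    nlinarith
  have hexinj : Function.Injective ex := by
    intro j j' h
    have h1 : (j : ℕ) % (t + 1) < c := (Nat.mod_lt _ (by omega)).trans_le hc
    have h1' : (j' : ℕ) % (t + 1) < c := (Nat.mod_lt _ (by omega)).trans_le hc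
    have hm := congrArg (· % c) h
    have hd := congrArg (· / c) h
    simp only [ex, Nat.add_mul_mod_self_left, Nat.mod_eq_of_lt h1, Nat.mod_eq_of_lt h1'] at hm
    simp only [ex, Nat.add_mul_div_left _ _ (show 0 < c by omega), Nat.div_eq_of_lt h1,
      Nat.div_eq_of_lt h1', zero_add] at hd
    ext
    rw [← Nat.mod_add_div (j : ℕ) (t + 1), ← Nat.mod_add_div (j' : ℕ) (t + 1), hm, hd]
  let x : Fin ((t + 1) * n + 1) → F := Fin.cons 0 fun j => (β : F) ^ ex j
  have hx : Function.Injective x := by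
    refine Fin.cons_injective_iff.2 ⟨?_, ?_⟩
    · rintro ⟨j, hj⟩
      exact pow_ne_zero _ β.ne_zero hj
    · intro j j' h
      have h' : β ^ ex j = β ^ ex j' := by ext; simpa using h
      exact hexinj (pow_injOn_Iio_orderOf (by simpa [hβo] using hexlt j)
        (by simpa [hβo] using hexlt j') h')
  have hφ : ∀ y : F, iterateFrobenius F p r y = y ^ q := fun y => by
    rw [iterateFrobenius_def, hpr]
  refine exists_code_of_points hq2 hF x hx (fun i => ?_) hk1 ?_
  · rw [← hφ]
    refine map_prod_sub_eq hn _ (fun s => ((β : F) ^ n) ^ s) (fun s => ?_) x hx ?_ i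
    · rw [map_pow, hφ, hβfix]
    · intro i
      refine Fin.cases (Or.inl rfl) (fun j => Or.inr ⟨j % (t + 1), Nat.mod_lt _ (by omega), ?_⟩) i
      have h1 : (β : F) ^ (n * c) = 1 := by
        rw [← hβo, ← Units.val_pow_eq_pow_val, pow_orderOf_eq_one, Units.val_one]
      simp only [x, Fin.cons_succ, ex]
      rw [← pow_mul, ← pow_mul, add_mul, pow_add, mul_comm n,
        show c * ((j : ℕ) / (t + 1)) * n = n * c * (j / (t + 1)) by ring, pow_mul _ (n * c), h1,
        one_pow, mul_one]
  · obtain ⟨l, rfl⟩ := Nat.exists_eq_add_of_le' hk1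
    have := (Nat.le_div_iff_mul_le (by omega)).1 hk2
    simp only [Nat.add_sub_cancel]
    nlinarith
end

section
/- Let q be a prime power, let α ∈ 𝔽_{q²} \ 𝔽_q, let t ≥ 1, and let u_1, …, u_t be pairwise distinct elements of 𝔽_q. Define h(x) = ∏_{i=1}^t ∏_{c ∈ 𝔽_q} (x − (u_i α + c)) ∈ 𝔽_{q²}[x]. Then for every i₀ ∈ {1,…,t} and every c₀ ∈ 𝔽_q, the formal derivative of h satisfies h'(u_{i₀} α + c₀) = −(α^q − α)^{t−1} · ∏_{i≠i₀} (u_{i₀} − u_i). In particular, (α^q − α)^{1−t} · h'(u_{i₀} α + c₀) lies in 𝔽_q^*. -/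
/-!
In characteristic `p ∣ q` the polynomial `P = X ^ q - X` satisfies `P ^ q + P = X ^ (q ^ 2) - X`, so
`P` divides a polynomial that splits over `F`; as `P` is separable, it is the product of `X - C c`
over the fixed points `c` of `x ↦ x ^ q` (`prod_X_sub_C_fixed`). By additivity of `x ↦ x ^ q`,
translating by `u α` with `u ^ q = u` turns each inner product into
`X ^ q - X - C (u * (α ^ q - α))` (`prod_X_sub_C_coset`). This factor has derivative `-1` and
takes the value `(u₀ - u) * (α ^ q - α)` at `u₀ α + c₀`, so only the factor with index `i₀` vanishes
there, and the product rule gives the derivative.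
-/

section
open Polynomial

/-- `q` is a power of the characteristic, since both are the only prime factor of `|F|`. -/
lemma exists_char_pow (q : ℕ) (hq : IsPrimePow q) (F : Type*) [Field F] [Fintype F]
    (hF : Fintype.card F = q ^ 2) :
    ∃ p k : ℕ, p.Prime ∧ CharP F p ∧ k ≠ 0 ∧ q = p ^ k := by
  obtain ⟨r, k, hr, hk, rfl⟩ := hq
  obtain ⟨p, hp⟩ := CharP.exists F
  obtain ⟨n, hpp, hn⟩ := FiniteField.card F p
  have hr' : r.Prime := hr.nat_prime
  have h1 : p ∣ (r ^ k) ^ 2 := by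
    rw [← hF, hn]
    exact dvd_pow_self p n.ne_zero
  have h2 : p = r :=
    (Nat.prime_dvd_prime_iff_eq hpp hr').1 (hpp.dvd_of_dvd_pow (hpp.dvd_of_dvd_pow h1))
  subst h2
  exact ⟨p, k, hpp, hp, hk.ne', rfl⟩

lemma prod_X_sub_C_fixed (p k : ℕ) [Fact p.Prime] (hk : k ≠ 0) (F : Type*) [Field F] [Fintype F]
    [DecidableEq F] [CharP F p] (hF : Fintype.card F = (p ^ k) ^ 2) :
    ∏ c ∈ Finset.univ.filter (fun c : F => c ^ p ^ k = c), (X - C c) =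
      (X ^ p ^ k - X : F[X]) := by
  have hq1 : 1 < p ^ k := Nat.one_lt_pow hk (Fact.out : p.Prime).one_lt
  have hmonic : (X ^ p ^ k - X : F[X]).Monic :=
    monic_X_pow_sub (by rw [degree_X]; exact_mod_cast hq1)
  have hcard : (X ^ Fintype.card F - X : F[X]).Splits :=
    splits_iff_card_roots.2 (by
      rw [FiniteField.roots_X_pow_card_sub_X, ← Finset.card_def, Finset.card_univ,
        FiniteField.X_pow_card_sub_X_natDegree_eq F Fintype.one_lt_card])
  have hdvd : (X ^ p ^ k - X : F[X]) ∣ X ^ Fintype.card F - X := by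
    have key : (X ^ Fintype.card F - X : F[X]) =
        (X ^ p ^ k - X) ^ p ^ k + (X ^ p ^ k - X) := by
      rw [sub_pow_char_pow, ← pow_mul, hF, sq]
      ring
    rw [key]
    exact dvd_add (dvd_pow_self _ (by omega)) dvd_rfl
  have hsplit : (X ^ p ^ k - X : F[X]).Splits :=
    hcard.of_dvd (FiniteField.X_pow_card_sub_X_ne_zero F Fintype.one_lt_card) hdvd
  have hnodup : (X ^ p ^ k - X : F[X]).roots.Nodup :=
    nodup_roots (galois_poly_separable p _ (dvd_pow_self p hk))
  have hroots : Finset.univ.filter (fun c : F => c ^ p ^ k = c) =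
      (X ^ p ^ k - X : F[X]).roots.toFinset := by
    ext c
    simp [mem_roots hmonic.ne_zero, sub_eq_zero]
  rw [hroots, Finset.prod, Multiset.toFinset_val, hnodup.dedup]
  exact (hsplit.eq_prod_roots_of_monic hmonic).symm

lemma prod_X_sub_C_coset (p k : ℕ) [Fact p.Prime] (hk : k ≠ 0) (F : Type*) [Field F] [Fintype F]
    [DecidableEq F] [CharP F p] (hF : Fintype.card F = (p ^ k) ^ 2) (α v : F)
    (hv : v ^ p ^ k = v) :
    ∏ c ∈ Finset.univ.filter (fun c : F => c ^ p ^ k = c), (X - C (v * α + c)) =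
      (X ^ p ^ k - X - C (v * (α ^ p ^ k - α)) : F[X]) := by
  have h := congrArg (fun f : F[X] => f.comp (X - C (v * α))) (prod_X_sub_C_fixed p k hk F hF)
  simp only [prod_comp, sub_comp, X_comp, C_comp, pow_comp] at h
  calc _ = ∏ c ∈ Finset.univ.filter (fun c : F => c ^ p ^ k = c), (X - C (v * α) - C c) :=
        Finset.prod_congr rfl fun c _ => by rw [C_add]; ring
    _ = _ := by
      rw [h, sub_pow_char_pow, ← C_pow, mul_pow, hv, mul_sub, C_sub]
      ring

end

open scoped BigOperators

open Polynomial in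
/-- For `α ∈ 𝔽_{q²} \\ 𝔽_q`, distinct `u₁,…,u_t ∈ 𝔽_q`, and
`h(x) = ∏ᵢ ∏_{c ∈ 𝔽_q} (x − (uᵢα + c))`, one has
`h'(u_{i₀}α + c₀) = −(α^q − α)^{t−1} ∏_{i≠i₀}(u_{i₀} − uᵢ)`; in particular
`(α^q − α)^{1−t} · h'(u_{i₀}α + c₀) ∈ 𝔽_q^*`. -/
theorem stmt11 (q : ℕ) (hq : IsPrimePow q)
    (F : Type*) [Field F] [Fintype F] [DecidableEq F]
    (hF : Fintype.card F = q ^ 2)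
    (α : F) (hαF : α ^ q ≠ α)
    (t : ℕ) (ht : 1 ≤ t)
    (u : Fin t → F) (hu : ∀ i, (u i) ^ q = u i) (huinj : Function.Injective u)
    (h : Polynomial F)
    (hh : h = ∏ i : Fin t, ∏ c ∈ Finset.univ.filter (fun c : F => c ^ q = c),
      (X - C (u i * α + c)))
    (i₀ : Fin t) (c₀ : F) (hc₀ : c₀ ^ q = c₀) :
    (Polynomial.derivative h).eval (u i₀ * α + c₀) =
      -(α ^ q - α) ^ (t - 1) * ∏ i ∈ Finset.univ.erase i₀, (u i₀ - u i) ∧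
    (((α ^ q - α) ^ (t - 1))⁻¹ *
        (Polynomial.derivative h).eval (u i₀ * α + c₀)) ^ q =
      ((α ^ q - α) ^ (t - 1))⁻¹ *
        (Polynomial.derivative h).eval (u i₀ * α + c₀) ∧
    ((α ^ q - α) ^ (t - 1))⁻¹ *
        (Polynomial.derivative h).eval (u i₀ * α + c₀) ≠ 0 := by
  obtain ⟨p, k, hp, hchar, hk, rfl⟩ := exists_char_pow q hq F hF
  haveI : Fact p.Prime := ⟨hp⟩
  have hq0 : ((p ^ k : ℕ) : F) = 0 :=
    (CharP.cast_eq_zero_iff F p _).2 (dvd_pow_self p hk)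
  have hβ : α ^ p ^ k - α ≠ 0 := sub_ne_zero.2 hαF
  have hval : (Polynomial.derivative h).eval (u i₀ * α + c₀) =
      -(α ^ p ^ k - α) ^ (t - 1) * ∏ i ∈ Finset.univ.erase i₀, (u i₀ - u i) := by
    have hh' : h = ∏ i : Fin t, (X ^ p ^ k - X - C (u i * (α ^ p ^ k - α))) := by
      rw [hh]
      exact Finset.prod_congr rfl fun i _ => prod_X_sub_C_coset p k hk F hF α (u i) (hu i)
    have hev : ∀ i, (X ^ p ^ k - X - C (u i * (α ^ p ^ k - α))).eval (u i₀ * α + c₀) =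
        (α ^ p ^ k - α) * (u i₀ - u i) := by
      intro i
      simp only [eval_sub, eval_pow, eval_X, eval_C]
      rw [add_pow_char_pow, mul_pow, hu, hc₀]
      ring
    have hder : derivative (X ^ p ^ k - X - C (u i₀ * (α ^ p ^ k - α))) = -1 := by
      rw [derivative_sub, derivative_sub, derivative_X_pow, hq0, derivative_X, derivative_C]
      simp
    rw [hh', ← Finset.mul_prod_erase _ _ (Finset.mem_univ i₀), derivative_mul, eval_add, eval_mul,
      eval_mul, hev i₀, hder, eval_prod, Finset.prod_congr rfl fun i _ => hev i,
      Finset.prod_mul_distrib, Finset.prod_const, Finset.card_erase_of_mem (Finset.mem_univ i₀),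
      Finset.card_univ, Fintype.card_fin]
    simp
  have hquot : ((α ^ p ^ k - α) ^ (t - 1))⁻¹ *
      (Polynomial.derivative h).eval (u i₀ * α + c₀) =
      -∏ i ∈ Finset.univ.erase i₀, (u i₀ - u i) := by
    rw [hval]
    field_simp
  refine ⟨hval, ?_, ?_⟩
  · rw [hquot, ← iterateFrobenius_def, map_neg, map_prod]
    simp only [map_sub, iterateFrobenius_def, hu]
  · rw [hquot]
    refine neg_ne_zero.2 (Finset.prod_ne_zero_iff.2 fun i hi => sub_ne_zero.2 fun e => ?_)
    exact Finset.ne_of_mem_erase hi (huinj e).symm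
end

section
/- Let q be a prime power and let t be an integer with 1 ≤ t ≤ q. Then for every integer k with 1 ≤ k ≤ ⌊(tq + q − 1)/(q+1)⌋ there exists an MDS Hermitian self-orthogonal [tq, k]_{q²} code. -/
/-!
The code is a generalized Reed–Solomon code `{(v i * f (a i)) : deg f < k}`, which is always MDS
(`exists_mds`). With `w i = ∏ j ≠ i, (a i - a j)⁻¹`, Lagrange interpolation gives
`∑ i, w i * p (a i) = 0` whenever `deg p ≤ n - 2` (`sum_weight_mul_eval`). If
`v i ^ (q + 1) = w i / w i₀`, the Hermitian product of the words of `f` and `g` is such a sum for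
`p = f * g ^ q`, up to a constant, and `deg p ≤ (k - 1) * (q + 1) ≤ t * q - 2` is exactly the bound
on `k`.

Such `v i` exist as soon as all `w i / w i₀` lie in `𝔽_q`, since the norm `𝔽_{q²} → 𝔽_q` is
surjective on units (`exists_pow_succ_eq`). The nodes achieving this are a union of `t` cosets of
`𝔽_q`, i.e. of `t` fibres of `x ↦ x ^ q - x` (`exists_nodes`). The set
`{u_i α + c : c ∈ 𝔽_q}` is the fibre over `u_i (α ^ q - α)`; working with fibres avoids
choosing `α` and naming the subfield.
-/

open scoped BigOperators

open Polynomial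

/-- The norm map `v ↦ v ^ (q + 1)` of `𝔽_{q²}` hits every nonzero element of `𝔽_q`
(described by `z ^ q = z`): the unit group is cyclic of order `(q - 1) * (q + 1)`. -/
lemma exists_pow_succ_eq {F : Type*} [Field F] [Fintype F] {q : ℕ} (hq : 2 ≤ q)
    (hF : Fintype.card F = q ^ 2) {z : F} (hz : z ≠ 0) (hzq : z ^ q = z) :
    ∃ v : F, v ≠ 0 ∧ v ^ (q + 1) = z := by
  classical
  obtain ⟨g, hg⟩ := IsCyclic.exists_generator (α := Fˣ)
  obtain ⟨m, hm⟩ := (mem_powers_iff_mem_zpowers (y := Units.mk0 z hz)).2 (hg (Units.mk0 z hz))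
  have hord : orderOf g = (q - 1) * (q + 1) := by
    rw [orderOf_eq_card_of_forall_mem_zpowers hg, Nat.card_eq_fintype_card,
      Fintype.card_units, hF]
    obtain ⟨r, rfl⟩ := Nat.exists_eq_add_of_le hq
    rw [Nat.sub_eq_iff_eq_add (Nat.one_le_pow _ _ (by omega)), show 2 + r - 1 = r + 1 by omega]
    ring
  have h1 : (Units.mk0 z hz) ^ (q - 1) = 1 := by
    ext
    have : z ^ (q - 1) * z = 1 * z := by
      rw [← pow_succ, Nat.sub_add_cancel (by omega), hzq, one_mul]
    simpa using mul_right_cancel₀ hz this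
  have h2 : (q - 1) * (q + 1) ∣ (q - 1) * m := by
    rw [← hord]
    apply orderOf_dvd_of_pow_eq_one
    rw [mul_comm, pow_mul]
    simpa only [hm] using h1
  obtain ⟨j, rfl⟩ := Nat.dvd_of_mul_dvd_mul_left (by omega) h2
  refine ⟨((g ^ j : Fˣ) : F), Units.ne_zero _, ?_⟩
  have h3 := congrArg (Units.val) hm
  simpa [← pow_mul, mul_comm] using h3

/-- The weighted sum is the coefficient of `X ^ (n - 1)` in the Lagrange interpolant of `p`,
which is `p` itself. -/
lemma sum_weight_mul_eval_s12 {F : Type*} [Field F] {n : ℕ} {a : Fin n → F}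
    (ha : Function.Injective a) (p : F[X]) (hp : p.natDegree + 1 < n) :
    ∑ i, Lagrange.nodalWeight Finset.univ a i * p.eval (a i) = 0 := by
  have hd : p.degree < (Finset.univ : Finset (Fin n)).card := by
    refine lt_of_le_of_lt degree_le_natDegree ?_
    simp only [Finset.card_univ, Fintype.card_fin]
    exact_mod_cast (by omega : p.natDegree < n)
  have h := Lagrange.coeff_eq_sum (s := Finset.univ) ha.injOn hd
  rw [coeff_eq_zero_of_natDegree_lt (by simp; omega)] at h
  rw [h]
  refine Finset.sum_congr rfl fun i _ => ?_
  rw [Lagrange.nodalWeight, Finset.prod_inv_distrib, div_eq_mul_inv, mul_comm]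

/-- The generalized Reed–Solomon code with nodes `a` and column multipliers `v` is MDS;
`hort` expresses its Hermitian self-orthogonality through polynomials. -/
lemma exists_mds {F : Type*} [Field F] {q n k : ℕ} {a v : Fin n → F}
    (ha : Function.Injective a) (hv : ∀ i, v i ≠ 0) (hk1 : 1 ≤ k) (hkn : k ≤ n)
    (hort : ∀ f g : F[X], f.natDegree ≤ k - 1 → g.natDegree ≤ k - 1 →
      ∑ i, v i ^ (q + 1) * (f.eval (a i) * g.eval (a i) ^ q) = 0) :
    ∃ C : Submodule F (Fin n → F),
      Module.finrank F C = k ∧ IsHermSelfOrth q C ∧ MinDistEq C (n - k + 1) := by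
  classical
  let φ : F[X] →ₗ[F] (Fin n → F) :=
    LinearMap.pi fun i => v i • Polynomial.leval (a i)
  have hφ : ∀ f i, φ f i = v i * f.eval (a i) := fun f i => by
    simp [φ, Polynomial.leval]
  have hdeg : ∀ f ∈ degreeLT F k, f.natDegree ≤ k - 1 := by
    intro f hf
    rw [mem_degreeLT] at hf
    by_cases h0 : f = 0
    · simp [h0]
    · have := (natDegree_lt_iff_degree_lt h0).2 hf
      omega
  -- a nonzero polynomial of degree `< k` has at most `k - 1` zeros among the nodes
  have hwt : ∀ f ∈ degreeLT F k, f ≠ 0 → n - k + 1 ≤ Set.ncard {i | φ f i ≠ 0} := by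
    intro f hf h0
    have hz : (Finset.univ.filter fun i => f.eval (a i) = 0).card ≤ k - 1 := by
      rw [← Finset.card_image_of_injective _ ha]
      refine le_trans ?_ ((card_roots' f).trans (hdeg f hf))
      refine le_trans (Finset.card_le_card ?_) (Multiset.toFinset_card_le f.roots)
      intro x hx
      simp only [Finset.mem_image, Finset.mem_filter, Finset.mem_univ, true_and] at hx
      obtain ⟨i, hi, rfl⟩ := hx
      simp [h0, hi]
    have hs := Finset.card_filter_add_card_filter_not (s := (Finset.univ : Finset (Fin n)))
      (fun i => f.eval (a i) = 0)
    have he : {i | φ f i ≠ 0} = ↑(Finset.univ.filter fun i => ¬ f.eval (a i) = 0) := by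
      ext i; simp [hφ, hv]
    rw [he, Set.ncard_coe_finset]
    simp only [Finset.card_univ, Fintype.card_fin] at hs
    omega
  have hinj : ∀ f ∈ degreeLT F k, φ f = 0 → f = 0 := by
    intro f hf h0
    by_contra hne
    have := hwt f hf hne
    simp [h0] at this
  refine ⟨(degreeLT F k).map φ, ?_, ?_, ?_, ?_⟩
  · have hi : Function.Injective (φ.domRestrict (degreeLT F k)) := by
      rw [← LinearMap.ker_eq_bot, LinearMap.ker_eq_bot']
      rintro ⟨f, hf⟩ h
      exact Subtype.ext (hinj f hf h)
    rw [← LinearMap.range_domRestrict, LinearMap.finrank_range_of_inj hi,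
      (degreeLTEquiv F k).finrank_eq]
    simp
  · rintro _ ⟨f, hf, rfl⟩ _ ⟨g, hg, rfl⟩
    rw [← hort f g (hdeg f hf) (hdeg g hg)]
    refine Finset.sum_congr rfl fun i _ => ?_
    rw [hφ, hφ]; ring
  · rintro _ ⟨f, hf, rfl⟩ h
    exact hwt f hf (by rintro rfl; simp at h)
  -- minimum weight is attained by the polynomial vanishing at exactly `k - 1` nodes
  · obtain ⟨S, -, hS⟩ := Finset.exists_subset_card_eq
      (s := (Finset.univ : Finset (Fin n))) (n := k - 1) (by simp; omega)
    have hmem : Lagrange.nodal S a ∈ degreeLT F k := by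
      rw [mem_degreeLT, Lagrange.degree_nodal, hS]
      exact_mod_cast (by omega : k - 1 < k)
    refine ⟨φ (Lagrange.nodal S a), ⟨_, hmem, rfl⟩,
      fun h => Lagrange.nodal_ne_zero (hinj _ hmem h), ?_⟩
    have he : {i | φ (Lagrange.nodal S a) i ≠ 0} = ↑(Sᶜ) := by
      ext i
      simp [hφ, hv, Lagrange.eval_nodal, Finset.prod_eq_zero_iff, sub_eq_zero, ha.eq_iff]
    rw [he, Set.ncard_coe_finset, Finset.card_compl, hS, Fintype.card_fin]
    omega

/-- There are `t * q` nodes whose Lagrange weights `w` all satisfy `w ^ q = ± w` with a common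
sign. The nodes are the preimage under `L x = x ^ q - x` of a `t`-element subset `T` of the image of
`L`. Their nodal polynomial is `∏ y ∈ T, (X ^ q - X - y)`, whose derivative at a node `x` is
`-∏ y ∈ T \ {L x}, (L x - y)`, and every element of the image of `L` satisfies `y ^ q = -y`. -/
lemma exists_nodes {F : Type*} [Field F] [Fintype F] {q t : ℕ} (hq : 2 ≤ q) (ht : t ≤ q)
    (hF : Fintype.card F = q ^ 2) (hsub : ∀ x y : F, (x - y) ^ q = x ^ q - y ^ q)
    (hq0 : (q : F) = 0) :
    ∃ a : Fin (t * q) → F, Function.Injective a ∧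
      ∀ i, (Lagrange.nodalWeight Finset.univ a i) ^ q
        = (-1) ^ (t - 1) * Lagrange.nodalWeight Finset.univ a i := by
  classical
  have hfrob : ∀ x : F, (x ^ q) ^ q = x := fun x => by
    rw [← pow_mul, ← sq, ← hF, FiniteField.pow_card]
  let L : F →+ F := AddMonoidHom.mk' (fun x => x ^ q - x) fun x y => by
    have h := hsub (x + y) y
    rw [add_sub_cancel_right] at h
    rw [h]; ring
  have hL : ∀ x, L x = x ^ q - x := fun _ => rfl
  have hneg : ∀ x : F, (-x) ^ q = - x ^ q := fun x => by
    have h := hsub 0 x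
    rwa [zero_sub, zero_pow (by omega), zero_sub] at h
  have hLq : ∀ x, L x ^ q = - L x := fun x => by
    rw [hL, hsub, hfrob]; ring
  -- the fibres of `L` and the image of `L` each have at most `q` elements, as roots of polynomials of degree `q`
  have hroots : ∀ c d : F, (Finset.univ.filter fun x : F => x ^ q - c * x - d = 0).card ≤ q := by
    intro c d
    have hd : (X ^ q - C c * X - C d : F[X]).natDegree = q := by
      rw [sub_sub]
      refine (natDegree_sub_eq_left_of_natDegree_lt ?_).trans (natDegree_X_pow q)
      rw [natDegree_X_pow]
      exact lt_of_le_of_lt natDegree_linear_le (by omega)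
    have h0 : (X ^ q - C c * X - C d : F[X]) ≠ 0 := by
      intro h; rw [h] at hd; simp at hd; omega
    refine le_trans ?_ ((card_roots' (X ^ q - C c * X - C d : F[X])).trans hd.le)
    refine le_trans (Finset.card_le_card ?_) (Multiset.toFinset_card_le _)
    intro x hx
    simp only [Finset.mem_filter, Finset.mem_univ, true_and] at hx
    simp [h0, hx]
  have hfibre_le : ∀ y, (Finset.univ.filter fun x : F => L x = y).card ≤ q := fun y => by
    simpa only [hL, one_mul, sub_eq_zero] using hroots 1 y
  have himage_le : (Finset.univ.image L).card ≤ q := by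
    refine le_trans (Finset.card_le_card ?_) (hroots (-1) 0)
    intro y hy
    obtain ⟨x, -, rfl⟩ := Finset.mem_image.1 hy
    simp [hLq]
  -- `|F| = q ^ 2` forces equality in both bounds
  have htotal : q ^ 2 = ∑ y ∈ Finset.univ.image L,
      (Finset.univ.filter fun x : F => L x = y).card := by
    rw [← hF, ← Finset.card_univ]
    exact Finset.card_eq_sum_card_image L _
  have hfibre : ∀ y ∈ Finset.univ.image L,
      (Finset.univ.filter fun x : F => L x = y).card = q := by
    intro y hy
    by_contra hne
    have hlt : ∑ y ∈ Finset.univ.image L, (Finset.univ.filter fun x : F => L x = y).card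
        < ∑ y ∈ Finset.univ.image L, q :=
      Finset.sum_lt_sum (fun z _ => hfibre_le z) ⟨y, hy, lt_of_le_of_ne (hfibre_le y) hne⟩
    rw [← htotal, Finset.sum_const, smul_eq_mul] at hlt
    nlinarith
  have himage : (Finset.univ.image L).card = q := by
    rw [Finset.sum_congr rfl hfibre, Finset.sum_const, smul_eq_mul, sq] at htotal
    exact (Nat.eq_of_mul_eq_mul_right (by omega) htotal).symm
  obtain ⟨T, hT, hTc⟩ := Finset.exists_subset_card_eq (ht.trans himage.ge)
  let A : Finset F := Finset.univ.filter fun x => L x ∈ T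
  have hA : A.card = t * q := by
    rw [Finset.card_eq_sum_card_fiberwise (f := L) (t := T) (fun x hx => by simpa [A] using hx)]
    rw [← hTc, ← smul_eq_mul, ← Finset.sum_const]
    refine Finset.sum_congr rfl fun y hy => ?_
    rw [← hfibre y (hT hy)]
    congr 1
    ext x
    simp only [A, Finset.mem_filter, Finset.mem_univ, true_and, and_iff_right_iff_imp]
    rintro rfl; exact hy
  let e := (A.equivFinOfCardEq hA).symm
  let a : Fin (t * q) → F := fun i => e i
  have ha : Function.Injective a := Subtype.val_injective.comp e.injective
  have haT : ∀ i, L (a i) ∈ T := fun i => (Finset.mem_filter.1 (e i).2).2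
  -- `N` will turn out to be the nodal polynomial of the nodes
  let N : F[X] := (Lagrange.nodal T id).comp (X ^ q - X)
  have hNe : ∀ x, N.eval x = ∏ y ∈ T, (L x - y) := fun x => by
    simp [N, Lagrange.eval_nodal, hL]
  have hmX : (X ^ q - X : F[X]).Monic := monic_X_pow_sub (by simp; omega)
  have hdX : (X ^ q - X : F[X]).natDegree = q := by
    refine (natDegree_sub_eq_left_of_natDegree_lt ?_).trans (natDegree_X_pow q)
    rw [natDegree_X_pow, natDegree_X]
    omega
  have hNm : N.Monic := (Lagrange.nodal_monic).comp hmX (by omega)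
  have hNd : N.natDegree = t * q := by
    rw [natDegree_comp, Lagrange.natDegree_nodal, hTc, hdX]
  have hN : Lagrange.nodal Finset.univ a = N := by
    refine Polynomial.eq_of_degree_le_of_eval_index_eq Finset.univ ha.injOn ?_ ?_ ?_ ?_
    · rw [Lagrange.degree_nodal]
    · rw [Lagrange.degree_nodal, degree_eq_natDegree hNm.ne_zero, hNd]; simp
    · rw [hNm.leadingCoeff, (Lagrange.nodal_monic).leadingCoeff]
    · intro i hi
      rw [Lagrange.eval_nodal_at_node hi, hNe]
      exact (Finset.prod_eq_zero (haT i) (sub_self _)).symm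
  refine ⟨a, ha, fun i => ?_⟩
  have hder : (derivative N).eval (a i) = - ∏ y ∈ T.erase (L (a i)), (L (a i) - y) := by
    have hev : (X ^ q - X : F[X]).eval (a i) = id (L (a i)) := by simp [hL]
    rw [derivative_comp, eval_mul, eval_comp, hev,
      Lagrange.eval_nodal_derivative_eval_node_eq (haT i), Lagrange.eval_nodal]
    simp [derivative_X_pow, hq0]
  rw [Lagrange.nodalWeight_eq_eval_derivative_nodal (Finset.mem_univ i), hN, hder, inv_pow, hneg,
    ← Finset.prod_pow]
  have hfac : ∀ y ∈ T.erase (L (a i)), (L (a i) - y) ^ q = (-1) * (L (a i) - y) := by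
    intro y hy
    obtain ⟨x, -, rfl⟩ := Finset.mem_image.1 (hT (Finset.mem_of_mem_erase hy))
    rw [hsub, hLq, hLq]; ring
  rw [Finset.prod_congr rfl hfac, Finset.prod_mul_distrib, Finset.prod_const,
    Finset.card_erase_of_mem (haT i), hTc, ← mul_neg, mul_inv, ← inv_pow, inv_neg_one]

/-- For `1 ≤ t ≤ q` and `1 ≤ k ≤ ⌊(tq+q−1)/(q+1)⌋` there exists an MDS Hermitian
self-orthogonal `[tq, k]_{q²}` code. -/
theorem stmt12 (q t : ℕ) (hq : IsPrimePow q) (ht1 : 1 ≤ t) (ht2 : t ≤ q)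
    (k : ℕ) (hk1 : 1 ≤ k) (hk2 : k ≤ (t * q + q - 1) / (q + 1))
    (F : Type*) [Field F] [Fintype F] (hF : Fintype.card F = q ^ 2) :
    ∃ C : Submodule F (Fin (t * q) → F),
      Module.finrank F C = k ∧ IsHermSelfOrth q C ∧
      MinDistEq C (t * q - k + 1) := by
  have hq2 : 2 ≤ q := hq.two_le
  obtain ⟨p, r, hp, hr, hpr⟩ := (isPrimePow_nat_iff q).1 hq
  have : Fact p.Prime := ⟨hp⟩
  have hchar : CharP F p := by
    have hc : Fintype.card F = p ^ (r * 2) := by rw [hF, ← hpr, pow_mul]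
    exact charP_of_card_eq_prime_pow hc
  have hsub : ∀ x y : F, (x - y) ^ q = x ^ q - y ^ q := fun x y => by
    rw [← hpr]; exact sub_pow_char_pow ..
  have hq0 : (q : F) = 0 := by
    rw [← hpr, Nat.cast_pow, CharP.cast_eq_zero, zero_pow hr.ne']
  obtain ⟨a, ha, hw⟩ := exists_nodes hq2 ht2 hF hsub hq0
  have hn : 1 * 2 ≤ t * q := Nat.mul_le_mul ht1 hq2
  have hkq : k * (q + 1) ≤ t * q + q - 1 := (Nat.le_div_iff_mul_le (by omega)).1 hk2
  have hkd : (k - 1) * (q + 1) + 1 < t * q := by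
    obtain ⟨j, rfl⟩ := Nat.exists_eq_add_of_le hk1
    rw [Nat.add_sub_cancel_left]
    have : (1 + j) * (q + 1) = j * (q + 1) + q + 1 := by ring
    omega
  have hkn : k ≤ t * q := by nlinarith [Nat.sub_add_cancel hk1]
  set w := Lagrange.nodalWeight Finset.univ a with hwdef
  have hw0 : ∀ i, w i ≠ 0 := fun i => Lagrange.nodalWeight_ne_zero ha.injOn (Finset.mem_univ i)
  -- quotients of weights are fixed by the Frobenius `z ↦ z ^ q`, hence are norms
  let i₀ : Fin (t * q) := ⟨0, by omega⟩
  have hv : ∀ i, ∃ v : F, v ≠ 0 ∧ v ^ (q + 1) = w i / w i₀ := fun i => by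
    refine exists_pow_succ_eq hq2 hF (div_ne_zero (hw0 i) (hw0 i₀)) ?_
    rw [div_pow, hw, hw, mul_div_mul_left _ _ (by simp)]
  choose v hv0 hv using hv
  refine exists_mds ha hv0 hk1 hkn fun f g hf hg => ?_
  have hdeg : (f * g ^ q).natDegree + 1 < t * q := by
    have h1 : (f * g ^ q).natDegree ≤ f.natDegree + q * g.natDegree :=
      natDegree_mul_le.trans (Nat.add_le_add_left natDegree_pow_le _)
    have h2 : q * g.natDegree ≤ q * (k - 1) := Nat.mul_le_mul_left _ hg
    have h3 : (k - 1) * (q + 1) = q * (k - 1) + (k - 1) := by ring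
    omega
  calc ∑ i, v i ^ (q + 1) * (f.eval (a i) * g.eval (a i) ^ q)
      = (w i₀)⁻¹ * ∑ i, w i * (f * g ^ q).eval (a i) := by
        rw [Finset.mul_sum]
        refine Finset.sum_congr rfl fun i _ => ?_
        rw [hv, eval_mul, eval_pow]; ring
    _ = 0 := by rw [sum_weight_mul_eval_s12 ha _ hdeg, mul_zero]
end

section
/- Let q be a prime power, let t be an integer with 1 ≤ t ≤ q, set N = tq, and let k be an integer with 1 ≤ k ≤ ⌊(N+q−1)/(q+1)⌋. (a) There exists an MDS Hermitian self-orthogonal [N, k]_{q²} code, whose Hermitian dual has minimum distance k+1. (b) If k(q+1) = N−1, there exists an MDS Hermitian self-orthogonal [N+1, k+1]_{q²} code, whose Hermitian dual has minimum distance k+2. (c) If N−1+q ≠ k(q+1) ≠ N−1, there exist n' ∈ {N, N+1} and an MDS Hermitian self-orthogonal [n', k+1]_{q²} code, whose Hermitian dual has minimum distance k+2. -/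
/-!
All the codes are generalised Reed–Solomon codes on a union of `t` fibres of the trace
`Tr x = x ^ q + x` from `𝔽_{q²}` to `𝔽_q`. Let `f` be the product of `X - c` over the `s = q - t`
remaining values of the trace. The weight `w x = f (Tr x)` takes values in `𝔽_q` and is nonzero at
exactly `N = t q` points (`exists_trace_set`), and as every nonzero element of `𝔽_q` is a norm
(`exists_norm`), columns can be scaled by `v x` with `v x ^ (q + 1) = w x`. Self-orthogonality of the
code of polynomials of degree at most `K` then says that the moments
`∑ x, w x * x ^ (i + q j)` vanish for `i, j ≤ K`.

Expanding `w` in monomials reduces this to power sums over `𝔽_{q²}`, which vanish unless the exponent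
is a positive multiple of `q² - 1` (`sum_pow_eq_zero`). When `K + s ≤ q` and `2 K + s ≤ 2 q - 2`, this
leaves at most the moment `γ` with `i = j = K` (`moment_eq_zero`). If `γ = 0` the code is
self-orthogonal (`grs_code`); if `γ ≠ 0` one adds the point at infinity with a multiplier of norm `-γ`
(`extended_grs_code`). In (a), `K = k - 1` and `γ = 0`; in (b), necessarily `t = q` and `k = q - 1`,
so `K = q - 1` and `γ = -1`; in (c), `K = k ≤ min t (q - 2)` and either case may occur.

The MDS property, and with it both minimum distances, follows from a polynomial of degree at most `K`
being determined by any `K + 1` coordinates (`mds_code`, `message_eq_zero`).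
-/

open scoped BigOperators

/-- The Hermitian dual `C^{⊥_H} = {x : ⟨x,c⟩_H = 0 for all c ∈ C}` of a code. -/
def hermDual (q : ℕ) {F : Type*} [Field F] {n : ℕ}
    (C : Submodule F (Fin n → F)) : Submodule F (Fin n → F) where
  carrier := {x | ∀ c ∈ C, ∑ i, x i * (c i) ^ q = 0}
  add_mem' := by
    intro a b ha hb c hc
    have h1 := ha c hc
    have h2 := hb c hc
    calc ∑ i, (a + b) i * c i ^ q
        = ∑ i, (a i * c i ^ q + b i * c i ^ q) := by
          simp [add_mul]
      _ = 0 := by rw [Finset.sum_add_distrib, h1, h2, add_zero]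
  zero_mem' := by intro c hc; simp
  smul_mem' := by
    intro r x hx c hc
    have h := hx c hc
    calc ∑ i, (r • x) i * c i ^ q = r * ∑ i, x i * c i ^ q := by
          simp [Finset.mul_sum, mul_assoc]
      _ = 0 := by rw [h, mul_zero]

/-! ### Frobenius and norms of the quadratic extension -/

/-- The map `x ↦ x ^ q` is a ring endomorphism of `𝔽_{q²}`. -/
lemma exists_frob {q : ℕ} (hq : IsPrimePow q) {F : Type*} [Field F] [Fintype F]
    (hF : Fintype.card F = q ^ 2) : ∃ φ : F →+* F, ∀ x, φ x = x ^ q := by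
  obtain ⟨p, n, hp, hn, rfl⟩ := hq
  have hp' : p.Prime := hp.nat_prime
  have : Fact p.Prime := ⟨hp'⟩
  have : CharP F p := by
    obtain ⟨p', hp'⟩ := CharP.exists F
    have hpr : p'.Prime := CharP.char_is_prime F p'
    obtain ⟨m, h1, h2⟩ := FiniteField.card F p'
    rw [hF, ← pow_mul] at h2
    have : p ∣ p' ^ (m : ℕ) := by
      rw [← h2]; exact dvd_pow_self _ (by positivity)
    have := (Nat.prime_dvd_prime_iff_eq (hp.nat_prime) hpr).1 (hp.nat_prime.dvd_of_dvd_pow this)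
    exact this ▸ hp'
  exact ⟨iterateFrobenius F p n, fun x => iterateFrobenius_def _ _ _⟩

/-- Every nonzero element of `𝔽_q` is a norm from `𝔽_{q²}`. -/
lemma exists_norm {q : ℕ} {F : Type*} [Field F] [Fintype F] (hq : 2 ≤ q)
    (hF : Fintype.card F = q ^ 2) {u : F} (hu : u ≠ 0) (huq : u ^ q = u) :
    ∃ v : F, v ≠ 0 ∧ v ^ (q + 1) = u := by
  classical
  obtain ⟨g, hg⟩ := IsCyclic.exists_generator (α := Fˣ)
  obtain ⟨m, hm⟩ := (mem_powers_iff_mem_zpowers.2 (hg (Units.mk0 u hu)) :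
    Units.mk0 u hu ∈ Submonoid.powers g)
  have hord : orderOf g = (q + 1) * (q - 1) := by
    rw [orderOf_eq_card_of_forall_mem_zpowers hg, Nat.card_eq_fintype_card, Fintype.card_units, hF]
    simpa using Nat.sq_sub_sq q 1
  have h1 : (g ^ m) ^ (q - 1) = 1 := by
    have hm' : g ^ m = Units.mk0 u hu := hm
    rw [hm']
    ext
    push_cast
    apply mul_left_cancel₀ hu
    rw [Units.val_mk0, ← pow_succ', Nat.sub_add_cancel (by omega), huq, mul_one]
  rw [← pow_mul, ← orderOf_dvd_iff_pow_eq_one, hord] at h1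
  obtain ⟨l, hl⟩ := Nat.dvd_of_mul_dvd_mul_right (by omega) h1
  refine ⟨(g ^ l : Fˣ), Units.ne_zero _, ?_⟩
  have := congrArg Units.val hm
  simp only [Units.val_mk0] at this
  rw [← this, hl]
  push_cast
  rw [← pow_mul, mul_comm]

/-! ### MDS codes from a generator matrix -/

lemma ncard_eq {F : Type*} [Field F] [DecidableEq F] {n : ℕ} (c : Fin n → F) :
    Set.ncard {i | c i ≠ 0} = (Finset.univ.filter fun i => c i ≠ 0).card := by
  rw [← Set.ncard_coe_finset]; congr; ext; simp

/-- A generator matrix `G` for which a message is determined by any `k` coordinates of its codeword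
generates an MDS code; if the rows are pairwise Hermitian orthogonal, it is Hermitian self-orthogonal.
Both minimum distances, of the code and of its Hermitian dual, come from dimension counts. -/
lemma mds_code_fin {q : ℕ} {F : Type*} [Field F] (φ : F →+* F) (hφ : ∀ x, φ x = x ^ q)
    {n k : ℕ} (hk : 1 ≤ k) (hkn : k + 1 ≤ n) (G : Fin k → Fin n → F)
    (hG : ∀ m : Fin k → F, ∀ T : Finset (Fin n), T.card = k →
      (∀ i ∈ T, ∑ j, m j * G j i = 0) → m = 0)
    (hso : ∀ j j', ∑ i, G j i * G j' i ^ q = 0) :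
    ∃ C : Submodule F (Fin n → F), Module.finrank F C = k ∧ IsHermSelfOrth q C ∧
      MinDistEq C (n - k + 1) ∧ MinDistEq (hermDual q C) (k + 1) := by
  classical
  let E : (Fin k → F) →ₗ[F] (Fin n → F) := Fintype.linearCombination F G
  have hE : ∀ m i, E m i = ∑ j, m j * G j i := by
    intro m i
    simp [E, Fintype.linearCombination_apply]
  -- pairing with a codeword is governed by the pairing with the rows of `G`
  have hpair : ∀ (x : Fin n → F) (m : Fin k → F),
      ∑ i, x i * E m i ^ q = ∑ j, m j ^ q * ∑ i, x i * G j i ^ q := by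
    intro x m
    simp_rw [← hφ, hE, map_sum, map_mul, Finset.mul_sum]
    rw [Finset.sum_comm]
    exact Finset.sum_congr rfl fun j _ => Finset.sum_congr rfl fun i _ => by ring
  have hw : ∀ c : Fin n → F, (Finset.univ.filter fun i => c i = 0).card +
      (Finset.univ.filter fun i => c i ≠ 0).card = n := by
    intro c
    simpa using Finset.card_filter_add_card_filter_not (s := (Finset.univ : Finset (Fin n)))
      (fun i => c i = 0)
  have hlow : ∀ m, m ≠ 0 → n - k + 1 ≤ (Finset.univ.filter fun i => E m i ≠ 0).card := by
    intro m hm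
    by_contra hlt
    have h1 := hw (E m)
    obtain ⟨T, hT, hTc⟩ := Finset.exists_subset_card_eq
      (show k ≤ (Finset.univ.filter fun i => E m i = 0).card by omega)
    refine hm (hG m T hTc fun i hi => ?_)
    have := hT hi
    simpa [hE] using this
  have hinj : Function.Injective E := by
    rw [← LinearMap.ker_eq_bot, LinearMap.ker_eq_bot']
    intro m hm
    by_contra h0
    have := hlow m h0
    simp [hm] at this
  have hdual_low : ∀ x ∈ hermDual q (LinearMap.range E), x ≠ 0 →
      k + 1 ≤ (Finset.univ.filter fun i => x i ≠ 0).card := by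
    intro x hx hx0
    by_contra hlt
    obtain ⟨T, hT, -, hTc⟩ := Finset.exists_subsuperset_card_eq
      (Finset.subset_univ (Finset.univ.filter fun i => x i ≠ 0))
      (show _ ≤ k by omega) (by simp; omega)
    -- encoding followed by restriction to `T` is bijective
    let R : (Fin k → F) →ₗ[F] (T → F) := (LinearMap.funLeft F F (Subtype.val : T → Fin n)) ∘ₗ E
    have hR : ∀ m i, R m i = E m i := fun m i => rfl
    have hRi : Function.Injective R := by
      rw [← LinearMap.ker_eq_bot, LinearMap.ker_eq_bot']
      intro m hm
      refine hG m T hTc fun i hi => ?_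
      rw [← hE, ← hR m ⟨i, hi⟩, hm]; rfl
    have hRs : Function.Surjective R :=
      (LinearMap.injective_iff_surjective_of_finrank_eq_finrank (by simp [hTc])).1 hRi
    apply hx0
    ext i
    by_contra hi
    have hiT : i ∈ T := hT (by simpa using hi)
    obtain ⟨m, hm⟩ := hRs (Pi.single ⟨i, hiT⟩ 1)
    have h0 := hx (E m) ⟨m, rfl⟩
    rw [Finset.sum_eq_single i] at h0
    · rw [← hR m ⟨i, hiT⟩, hm] at h0
      simp at h0
      exact hi h0
    · intro b _ hb
      by_cases hbx : x b = 0
      · simp [hbx]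
      · have hbT : b ∈ T := hT (by simpa using hbx)
        rw [← hφ, ← hR m ⟨b, hbT⟩, hm, Pi.single_eq_of_ne (by simpa using hb), map_zero, mul_zero]
    · simp
  refine ⟨LinearMap.range E, ?_, ?_, ⟨?_, ?_⟩, ⟨?_, ?_⟩⟩
  · rw [LinearMap.finrank_range_of_inj hinj]; simp
  · rintro _ ⟨m, rfl⟩ _ ⟨m', rfl⟩
    rw [hpair]
    refine Finset.sum_eq_zero fun j _ => ?_
    have : ∑ i, E m i * G j i ^ q = ∑ j', m j' * ∑ i, G j' i * G j i ^ q := by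
      simp_rw [hE, Finset.mul_sum, Finset.sum_mul]
      rw [Finset.sum_comm]
      exact Finset.sum_congr rfl fun j _ => Finset.sum_congr rfl fun i _ => by ring
    simp [this, hso]
  · rintro _ ⟨m, rfl⟩ hm
    rw [ncard_eq]
    exact hlow m (by rintro rfl; simp at hm)
  · obtain ⟨T, -, hTc⟩ := Finset.exists_subset_card_eq
      (show k - 1 ≤ (Finset.univ : Finset (Fin n)).card by simp; omega)
    let R : (Fin k → F) →ₗ[F] (T → F) := (LinearMap.funLeft F F (Subtype.val : T → Fin n)) ∘ₗ E
    obtain ⟨m, hm, hm0⟩ := (Submodule.ne_bot_iff _).1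
      (LinearMap.ker_ne_bot_of_finrank_lt (f := R) (by simp [hTc]; omega))
    refine ⟨E m, ⟨m, rfl⟩, fun h => hm0 (hinj (by simpa using h)), ?_⟩
    rw [ncard_eq]
    have h1 := hw (E m)
    have h2 := hlow m hm0
    have h3 : T ⊆ Finset.univ.filter fun i => E m i = 0 := by
      intro i hi
      have : R m ⟨i, hi⟩ = 0 := by rw [LinearMap.mem_ker.1 hm]; rfl
      exact Finset.mem_filter.2 ⟨Finset.mem_univ _, this⟩
    have := Finset.card_le_card h3
    omega
  · intro x hx hx0
    rw [ncard_eq]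
    exact hdual_low x hx hx0
  · obtain ⟨T, -, hTc⟩ := Finset.exists_subset_card_eq
      (show k + 1 ≤ (Finset.univ : Finset (Fin n)).card by simp; omega)
    -- a linear dependency among the conjugated columns indexed by `T`
    let R : (T → F) →ₗ[F] (Fin k → F) :=
      Fintype.linearCombination F fun (i : T) (j : Fin k) => G j i ^ q
    obtain ⟨y, hy, hy0⟩ := (Submodule.ne_bot_iff _).1
      (LinearMap.ker_ne_bot_of_finrank_lt (f := R) (by simp [hTc]))
    let x : Fin n → F := fun i => if h : i ∈ T then y ⟨i, h⟩ else 0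
    have hxT : ∀ i : T, x i = y i := fun i => by simp [x]
    have hx0 : x ≠ 0 := by
      rintro h
      apply hy0
      ext i
      rw [← hxT, h]; rfl
    have hxd : x ∈ hermDual q (LinearMap.range E) := by
      rintro _ ⟨m, rfl⟩
      rw [hpair]
      refine Finset.sum_eq_zero fun j _ => ?_
      have h1 : ∑ i, x i * G j i ^ q = ∑ i ∈ T, x i * G j i ^ q := by
        symm
        apply Finset.sum_subset (Finset.subset_univ _)
        intro i _ hi
        simp [x, hi]
      have h2 := congrFun (LinearMap.mem_ker.1 hy) j
      rw [h1, ← Finset.sum_coe_sort]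
      simp only [R, Fintype.linearCombination_apply, Finset.sum_apply, Pi.smul_apply, smul_eq_mul,
        Pi.zero_apply] at h2
      simp_rw [hxT, h2, mul_zero]
    refine ⟨x, hxd, hx0, ?_⟩
    rw [ncard_eq]
    refine le_antisymm ?_ (hdual_low x hxd hx0)
    rw [← hTc]
    apply Finset.card_le_card
    intro i hi
    by_contra h
    simp [x, h] at hi

/-- Version of `mds_code_fin` with coordinates indexed by an arbitrary finite type. -/
lemma mds_code {q : ℕ} {F : Type*} [Field F] (φ : F →+* F) (hφ : ∀ x, φ x = x ^ q)
    {ι : Type*} [Fintype ι] {n k : ℕ} (hn : Fintype.card ι = n)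
    (hk : 1 ≤ k) (hkn : k + 1 ≤ n) (G : Fin k → ι → F)
    (hG : ∀ m : Fin k → F, ∀ T : Finset ι, T.card = k →
      (∀ i ∈ T, ∑ j, m j * G j i = 0) → m = 0)
    (hso : ∀ j j', ∑ i, G j i * G j' i ^ q = 0) :
    ∃ C : Submodule F (Fin n → F), Module.finrank F C = k ∧ IsHermSelfOrth q C ∧
      MinDistEq C (n - k + 1) ∧ MinDistEq (hermDual q C) (k + 1) := by
  let e := (Fintype.equivFinOfCardEq hn).symm
  refine mds_code_fin φ hφ hk hkn (fun j i => G j (e i)) ?_ ?_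
  · intro m T hT h
    refine hG m (T.map e.toEmbedding) (by simpa using hT) ?_
    intro i hi
    obtain ⟨a, ha, rfl⟩ := Finset.mem_map.1 hi
    exact h a ha
  · intro j j'
    rw [← hso j j']
    exact e.sum_comp (fun i => G j i * G j' i ^ q)

/-! ### Power sums, evaluation of polynomials, and the trace -/

/-- The power sum over `𝔽_{q²}` of exponent `α + q β` vanishes unless the exponent is a positive
multiple of `q² - 1`; for base-`q` digits this small, that happens only at `α = β = q - 1`. -/
lemma sum_pow_eq_zero {q : ℕ} (hq : 2 ≤ q) {F : Type*} [Field F] [Fintype F]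
    (hF : Fintype.card F = q ^ 2) {α β : ℕ} (hβ : β ≤ q) (hs : α + β ≤ 2 * q - 2)
    (hne : ¬ (α = q - 1 ∧ β = q - 1)) : ∑ x : F, x ^ (α + q * β) = 0 := by
  classical
  by_cases h0 : α + q * β = 0
  · rw [h0]
    apply FiniteField.sum_pow_lt_card_sub_one
    rw [hF]; have : 2 * 2 ≤ q ^ 2 := by rw [sq]; exact Nat.mul_le_mul hq hq
    omega
  have h1 := FiniteField.sum_pow_units F (α + q * β)
  have h2 : ∑ x : F, x ^ (α + q * β) = ∑ x : Fˣ, (x : F) ^ (α + q * β) := by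
    rw [← Finset.sum_subset (Finset.subset_univ (Finset.univ.map
      ⟨((↑) : Fˣ → F), Units.val_injective⟩))]
    · simp
    · intro x _ hx
      have : x = 0 := by
        by_contra hx0
        exact hx (Finset.mem_map.2 ⟨Units.mk0 x hx0, Finset.mem_univ _, rfl⟩)
      rw [this, zero_pow h0]
  rw [h2]
  refine h1.trans (if_neg ?_)
  rw [hF]
  obtain ⟨r, rfl⟩ : ∃ r, q = r + 1 := ⟨q - 1, by omega⟩
  have e1 : (r + 1) ^ 2 - 1 = r * (r + 2) := by
    have : (r + 1) ^ 2 = r * (r + 2) + 1 := by ring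
    omega
  rw [e1]
  intro hd
  have e2 : α + (r + 1) * β = (α + β) + r * β := by ring
  have hd1 : r ∣ α + β := by
    have := (dvd_mul_right r (r + 2)).trans hd
    rw [e2] at this
    exact (Nat.dvd_add_left (dvd_mul_right r β)).1 this
  obtain ⟨c, hc⟩ := hd1
  have hr : 0 < r := by omega
  have hc2 : c ≤ 2 := by
    have : r * c ≤ r * 2 := by rw [← hc]; omega
    exact Nat.le_of_mul_le_mul_left this hr
  rw [e2, hc, ← mul_add] at hd
  have hd2 : r + 2 ∣ c + β := Nat.dvd_of_mul_dvd_mul_left hr hd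
  have hpos : 0 < c + β := by
    by_contra hn
    have : c = 0 ∧ β = 0 := by omega
    apply h0
    rw [this.1] at hc
    rw [this.2] at hc ⊢
    omega
  have hle := Nat.le_of_dvd hpos hd2
  interval_cases c
  · omega
  · omega
  · -- `c = 2`: here `r ≤ β ≤ r + 1`, and `β = r + 1` would give `r + 2 ∣ r + 3`
    rcases (by omega : β = r ∨ β = r + 1) with h | h
    · exact hne ⟨by omega, by omega⟩
    · rw [h] at hd2
      have : r + 2 ∣ 1 := by
        have h3 : 2 + (r + 1) = (r + 2) + 1 := by ring
        rw [h3] at hd2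
        exact (Nat.dvd_add_right (dvd_refl _)).1 hd2
      have := Nat.le_of_dvd one_pos this
      omega

/-- Vanishing of the weighted moments. Expanding `f (x ^ q + x) * x ^ i * x ^ (q j)` gives monomials
`x ^ (α + q β)` with `α + β ≤ i + j + s`, so the only possible obstruction is the exponent
`(q - 1) + q (q - 1)`, which needs `i + j + s = 2 q - 2`. -/
lemma moment_eq_zero {q : ℕ} (hq : 2 ≤ q) {F : Type*} [Field F] [Fintype F]
    (hF : Fintype.card F = q ^ 2) (f : Polynomial F) {s K i j : ℕ} (hf : f.natDegree ≤ s)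
    (hK1 : K + s ≤ q) (hK2 : 2 * K + s ≤ 2 * q - 2) (hi : i ≤ K) (hj : j ≤ K)
    (hij : ¬ (i + j + s = 2 * q - 2)) :
    ∑ x : F, f.eval (x ^ q + x) * (x ^ i * (x ^ j) ^ q) = 0 := by
  simp_rw [Polynomial.eval_eq_sum_range' (Nat.lt_succ_of_le hf), Finset.sum_mul]
  rw [Finset.sum_comm]
  refine Finset.sum_eq_zero fun m hm => ?_
  have hm' : m ≤ s := by simpa [Nat.lt_succ_iff] using hm
  simp_rw [add_pow, Finset.mul_sum, Finset.sum_mul]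
  rw [Finset.sum_comm]
  refine Finset.sum_eq_zero fun l hl => ?_
  have hl' : l ≤ m := by simpa [Nat.lt_succ_iff] using hl
  have := sum_pow_eq_zero hq hF (α := i + (m - l)) (β := j + l) (by omega) (by omega) (by omega)
  rw [← mul_zero (f.coeff m * (m.choose l : F)), ← this, Finset.mul_sum]
  refine Finset.sum_congr rfl fun x _ => ?_
  rw [← pow_mul, ← pow_mul, pow_add, pow_add, mul_add, pow_add, mul_comm j q]
  ring

lemma poly_message {F : Type*} [Field F] {K : ℕ} (m : Fin K → F) :
    ∃ p : Polynomial F, p.degree < K ∧ (∀ x, p.eval x = ∑ j, m j * x ^ (j : ℕ)) ∧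
      ∀ j : Fin K, p.coeff j = m j := by
  classical
  refine ⟨∑ j : Fin K, Polynomial.C (m j) * Polynomial.X ^ (j : ℕ), ?_, ?_, ?_⟩
  · exact Polynomial.degree_sum_fin_lt m
  · intro x; simp [Polynomial.eval_finsetSum]
  · intro j
    simp [Polynomial.finsetSum_coeff, Polynomial.coeff_C_mul, Polynomial.coeff_X_pow, Fin.val_inj]

/-- The MDS property of (extended) Reed–Solomon evaluation: a polynomial of degree less than `K`
with coefficient vector `m` vanishes if it has `K` distinct roots, or `K - 1` distinct roots and
vanishing coefficient at `X ^ (K - 1)` (a root at infinity). -/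
lemma message_eq_zero {F : Type*} [Field F] {K : ℕ} (m : Fin K → F) (T : Finset F)
    (h : ∀ a ∈ T, ∑ j, m j * a ^ (j : ℕ) = 0)
    (hT : T.card = K ∨ (T.card + 1 = K ∧ ∀ j : Fin K, (j : ℕ) + 1 = K → m j = 0)) : m = 0 := by
  obtain ⟨p, hp, he, hc⟩ := poly_message m
  have hp0 : p = 0 := by
    refine Polynomial.eq_zero_of_degree_lt_of_eval_finset_eq_zero T ?_ fun a ha => by
      rw [he, h a ha]
    rcases hT with hT | ⟨hT, h0⟩
    · rwa [hT]
    · rw [Polynomial.degree_lt_iff_coeff_zero]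
      intro d hd
      rcases Nat.lt_or_ge d K with hd' | hd'
      · rw [show d = ((⟨d, hd'⟩ : Fin K) : ℕ) from rfl, hc]
        exact h0 _ (by simp; omega)
      · exact Polynomial.coeff_eq_zero_of_degree_lt (hp.trans_le (by exact_mod_cast hd'))
  ext j
  rw [← hc, hp0]; simp

/-- Since `x ↦ x ^ q + x` is additive with image of size `q` and fibres of size `q`, taking `f` to be
the product of `X - c` over `q - t` values `c` of the image gives an `𝔽_q`-valued weight
`f (x ^ q + x)` with exactly `t q` nonzero values. -/
lemma exists_trace_set {q t : ℕ} (hq : 2 ≤ q) {F : Type*} [Field F] [Fintype F]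
    (hF : Fintype.card F = q ^ 2) (φ : F →+* F) (hφ : ∀ x, φ x = x ^ q) (ht : t ≤ q) :
    ∃ f : Polynomial F, f.natDegree = q - t ∧ (t = q → f = 1) ∧
      (∀ x : F, f.eval (x ^ q + x) ^ q = f.eval (x ^ q + x)) ∧
      Set.ncard {x : F | f.eval (x ^ q + x) ≠ 0} = t * q := by
  classical
  have hpow : ∀ x : F, (x ^ q) ^ q = x := fun x => by
    rw [← pow_mul, ← sq, ← hF, FiniteField.pow_card]
  let Tr : F →+ F := φ.toAddMonoidHom + AddMonoidHom.id F
  have hTr : ∀ x, Tr x = x ^ q + x := fun x => by simp [Tr, hφ]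
  have hfix : ∀ x, Tr x ^ q = Tr x := fun x => by
    rw [hTr, ← hφ (_ + _), map_add, hφ, hφ, hpow, add_comm]
  let I : Finset F := Finset.univ.image Tr
  let Z : Finset F := Finset.univ.filter fun x => Tr x = 0
  have hfib : ∀ b ∈ I, (Finset.univ.filter fun x => Tr x = b).card = Z.card := by
    intro b hb
    apply AddMonoidHom.card_fiber_eq_of_mem_range Tr
    · simpa [I] using hb
    · exact ⟨0, map_zero _⟩
  have hprod : q ^ 2 = I.card * Z.card := by
    rw [← hF, ← Finset.card_univ, Finset.card_eq_sum_card_fiberwise (f := Tr) (t := I)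
      (fun x _ => by simp [I]), Finset.sum_congr rfl hfib]
    simp
  -- the image lies in the roots of `X ^ q - X`, the kernel consists of roots of `X ^ q + X`;
  -- both therefore have at most `q` elements, and the product formula makes both bounds sharp
  have hI : I.card ≤ q := by
    have hdeg : (Polynomial.X ^ q - Polynomial.X : Polynomial F).natDegree = q :=
      FiniteField.X_pow_card_sub_X_natDegree_eq F (by omega)
    have hne : (Polynomial.X ^ q - Polynomial.X : Polynomial F) ≠ 0 :=
      FiniteField.X_pow_card_sub_X_ne_zero F (by omega)
    by_contra hlt
    apply hne
    refine Polynomial.eq_zero_of_natDegree_lt_card_of_eval_eq_zero' _ I ?_ (by omega)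
    intro b hb
    obtain ⟨x, -, rfl⟩ := Finset.mem_image.1 hb
    simp [hfix]
  have hZ : Z.card ≤ q := by
    have hdeg : (Polynomial.X ^ q + Polynomial.X : Polynomial F).natDegree = q := by
      rw [Polynomial.natDegree_add_eq_left_of_natDegree_lt] <;> simp; omega
    by_contra hlt
    have h0 : (Polynomial.X ^ q + Polynomial.X : Polynomial F) = 0 := by
      refine Polynomial.eq_zero_of_natDegree_lt_card_of_eval_eq_zero' _ Z ?_ (by omega)
      intro b hb
      simpa [Z, hTr] using hb
    rw [h0] at hdeg
    simp at hdeg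
    omega
  have hI' : I.card = q := by nlinarith
  have hZ' : Z.card = q := by nlinarith
  obtain ⟨B, hBI, hB⟩ := Finset.exists_subset_card_eq (show t ≤ I.card by omega)
  have hcard : (I \ B).card = q - t := by rw [Finset.card_sdiff_of_subset hBI, hI', hB]
  refine ⟨∏ c ∈ I \ B, (Polynomial.X - Polynomial.C c), ?_, ?_, ?_, ?_⟩
  · rw [Polynomial.natDegree_prod_of_monic _ _ fun c _ => Polynomial.monic_X_sub_C c]
    simp [hcard]
  · rintro rfl
    rw [Finset.card_eq_zero.1 (hcard.trans (by simp))]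
    simp
  · intro x
    rw [← hTr, Polynomial.eval_prod, ← hφ, map_prod]
    refine Finset.prod_congr rfl fun c hc => ?_
    obtain ⟨y, -, rfl⟩ := Finset.mem_image.1 (Finset.mem_sdiff.1 hc).1
    rw [Polynomial.eval_sub, Polynomial.eval_X, Polynomial.eval_C, map_sub, hφ, hφ, hfix, hfix]
  · have : {x : F | (∏ c ∈ I \ B, (Polynomial.X - Polynomial.C c)).eval (x ^ q + x) ≠ 0} =
        ((Finset.univ.filter fun x => Tr x ∈ B : Finset F) : Set F) := by
      ext x
      rw [Set.mem_ofPred_eq, ← hTr, Polynomial.eval_prod, Finset.prod_ne_zero_iff]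
      simp only [Polynomial.eval_sub, Polynomial.eval_X, Polynomial.eval_C, sub_ne_zero,
        Finset.coe_filter, Finset.mem_univ, true_and, Set.mem_ofPred_eq]
      constructor
      · intro h
        by_contra hx
        exact h (Tr x) (Finset.mem_sdiff.2 ⟨by simp [I], hx⟩) rfl
      · rintro h c hc rfl
        exact (Finset.mem_sdiff.1 hc).2 h
    rw [this, Set.ncard_coe_finset, Finset.card_eq_sum_card_fiberwise (f := Tr) (t := B)
      (fun x hx => by simpa using hx), ← hB, ← smul_eq_mul, ← Finset.sum_const]
    refine Finset.sum_congr rfl fun b hb => ?_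
    rw [← hZ', ← hfib b (hBI hb), Finset.filter_filter]
    congr 1
    ext x
    simp only [Finset.mem_filter, Finset.mem_univ, true_and, and_iff_right_iff_imp]
    rintro rfl; exact hb

/-! ### Generalised Reed–Solomon codes with norm weights -/

lemma sum_message_weight {F : Type*} [Field F] {K : ℕ} (m : Fin K → F) {v a : F}
    (hv : v ≠ 0) (h : ∑ j, m j * (v * a ^ (j : ℕ)) = 0) : ∑ j, m j * a ^ (j : ℕ) = 0 := by
  refine (mul_eq_zero.1 ?_).resolve_left hv
  rw [← h, Finset.mul_sum]
  exact Finset.sum_congr rfl fun j _ => by ring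

lemma sum_weight {q : ℕ} {F : Type*} [Field F] [Fintype F] [DecidableEq F] (w : F → F)
    (v : {x // w x ≠ 0} → F) (hv : ∀ a, v a ^ (q + 1) = w a) (i j : ℕ) :
    ∑ a : {x // w x ≠ 0}, v a * (a : F) ^ i * (v a * (a : F) ^ j) ^ q =
      ∑ x : F, w x * (x ^ i * (x ^ j) ^ q) := by
  have h1 : ∑ x : F, w x * (x ^ i * (x ^ j) ^ q) =
      ∑ x ∈ Finset.univ.filter (fun x => w x ≠ 0), w x * (x ^ i * (x ^ j) ^ q) := by
    symm
    apply Finset.sum_subset (Finset.subset_univ _)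
    intro x _ hx
    have : w x = 0 := by simpa using hx
    simp [this]
  rw [h1, Finset.sum_subtype (p := fun x => w x ≠ 0) _ (by simp)]
  refine Finset.sum_congr rfl fun a _ => ?_
  rw [← hv a, mul_pow]
  ring

/-- Column multipliers `v` whose norms are the given nonzero `𝔽_q`-valued weights. -/
lemma exists_weights {q : ℕ} (hq : 2 ≤ q) {F : Type*} [Field F] [Fintype F]
    (hF : Fintype.card F = q ^ 2) (w : F → F) (hw : ∀ x, w x ^ q = w x) :
    ∃ v : {x // w x ≠ 0} → F, (∀ a, v a ≠ 0) ∧ ∀ a, v a ^ (q + 1) = w a := by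
  have : ∀ a : {x // w x ≠ 0}, ∃ v : F, v ≠ 0 ∧ v ^ (q + 1) = w a :=
    fun a => exists_norm hq hF a.2 (hw a)
  choose v h1 h2 using this
  exact ⟨v, h1, h2⟩

/-- The generalised Reed–Solomon code on the support of an `𝔽_q`-valued weight `w`, with columns scaled
by elements of norm `w x`, is Hermitian self-orthogonal when the `w`-weighted moments vanish. -/
lemma grs_code {q : ℕ} (hq : 2 ≤ q) {F : Type*} [Field F] [Fintype F]
    (hF : Fintype.card F = q ^ 2) (φ : F →+* F) (hφ : ∀ x, φ x = x ^ q) (w : F → F)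
    (hw : ∀ x, w x ^ q = w x) {n K : ℕ} (hn : Set.ncard {x | w x ≠ 0} = n) (hK : 1 ≤ K)
    (hKn : K + 1 ≤ n)
    (hM : ∀ i j, i < K → j < K → ∑ x : F, w x * (x ^ i * (x ^ j) ^ q) = 0) :
    ∃ C : Submodule F (Fin n → F), Module.finrank F C = K ∧ IsHermSelfOrth q C ∧
      MinDistEq C (n - K + 1) ∧ MinDistEq (hermDual q C) (K + 1) := by
  classical
  obtain ⟨v, hv0, hv⟩ := exists_weights hq hF w hw
  refine mds_code φ hφ (ι := {x // w x ≠ 0}) ?_ hK hKn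
    (fun j a => v a * (a : F) ^ (j : ℕ)) ?_ ?_
  · rw [← hn, ← Nat.card_eq_fintype_card]; rfl
  · intro m T hT h
    refine message_eq_zero m (T.map (Function.Embedding.subtype _)) ?_ (Or.inl (by simpa using hT))
    intro a ha
    obtain ⟨b, hb, rfl⟩ := Finset.mem_map.1 ha
    exact sum_message_weight m (hv0 b) (h b hb)
  · intro j l
    rw [sum_weight w v hv]
    exact hM _ _ j.isLt l.isLt

/-- If only the top moment `γ` (for `i = j = K`) is nonzero, adding a coordinate at infinity, which
reads the coefficient of `X ^ K` scaled by an element of norm `-γ`, restores self-orthogonality. -/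
lemma extended_grs_code {q : ℕ} (hq : 2 ≤ q) {F : Type*} [Field F] [Fintype F]
    (hF : Fintype.card F = q ^ 2) (φ : F →+* F) (hφ : ∀ x, φ x = x ^ q) (w : F → F)
    (hw : ∀ x, w x ^ q = w x) {n K : ℕ} (hn : Set.ncard {x | w x ≠ 0} = n) (hKn : K + 1 ≤ n)
    (hM : ∀ i j, i ≤ K → j ≤ K → ¬ (i = K ∧ j = K) →
      ∑ x : F, w x * (x ^ i * (x ^ j) ^ q) = 0)
    (hγ : ∑ x : F, w x * (x ^ K * (x ^ K) ^ q) ≠ 0) :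
    ∃ C : Submodule F (Fin (n + 1) → F), Module.finrank F C = K + 1 ∧ IsHermSelfOrth q C ∧
      MinDistEq C ((n + 1) - (K + 1) + 1) ∧ MinDistEq (hermDual q C) (K + 2) := by
  classical
  obtain ⟨v, hv0, hv⟩ := exists_weights hq hF w hw
  set γ := ∑ x : F, w x * (x ^ K * (x ^ K) ^ q) with hγdef
  have hpow : ∀ x : F, (x ^ q) ^ q = x := fun x => by
    rw [← pow_mul, ← sq, ← hF, FiniteField.pow_card]
  have hγq : (-γ) ^ q = -γ := by
    rw [← hφ, map_neg, hγdef, map_sum]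
    congr 1
    refine Finset.sum_congr rfl fun x _ => ?_
    rw [map_mul, map_mul, hφ, hφ, hφ, hw, hpow, mul_comm (x ^ K)]
  -- `γ` lies in `𝔽_q`, so `-γ` is a norm
  obtain ⟨ω, hω0, hω⟩ := exists_norm hq hF (neg_ne_zero.2 hγ) hγq
  refine mds_code φ hφ (ι := Option {x // w x ≠ 0}) ?_ (by omega) (by omega)
    (fun j a => a.elim (if (j : ℕ) = K then ω else 0) fun a => v a * (a : F) ^ (j : ℕ)) ?_ ?_
  · rw [Fintype.card_option, ← hn, ← Nat.card_eq_fintype_card]; rfl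
  · intro m T hT h
    refine message_eq_zero m (T.eraseNone.map (Function.Embedding.subtype _)) ?_ ?_
    · intro a ha
      obtain ⟨b, hb, rfl⟩ := Finset.mem_map.1 ha
      exact sum_message_weight m (hv0 b) (h (some b) (Finset.mem_eraseNone.1 hb))
    · rw [Finset.card_map]
      by_cases hT0 : none ∈ T
      · right
        constructor
        · rw [Finset.card_eraseNone_of_mem hT0, hT]; rfl
        · intro j hj
          have h0 := h none hT0
          rw [Finset.sum_eq_single j] at h0
          · simpa [show (j : ℕ) = K by omega, hω0] using h0
          · intro b _ hb
            have : (b : ℕ) ≠ K := fun hbK => hb (Fin.ext (by omega))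
            simp [this]
          · simp
      · left
        rw [Finset.card_eraseNone_of_not_mem hT0, hT]
  · intro j j'
    rw [Fintype.sum_option]
    simp only [Option.elim_none, Option.elim_some]
    rw [sum_weight w v hv]
    by_cases hjj : (j : ℕ) = K ∧ (j' : ℕ) = K
    · rw [hjj.1, hjj.2, if_pos rfl, ← hγdef, ← pow_succ', hω]
      ring
    · rw [hM _ _ (by omega) (by omega) hjj]
      by_cases h1 : (j : ℕ) = K
      · rw [if_neg (fun h2 => hjj ⟨h1, h2⟩), zero_pow (by omega)]
        simp
      · simp [h1]

/-- MDS quantum theorem (classical form) for lengths `N = tq`, `1 ≤ t ≤ q`,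
`1 ≤ k ≤ ⌊(N+q−1)/(q+1)⌋`:
(a) an MDS Hermitian self-orthogonal `[N,k]` code with dual distance `k+1` exists;
(b) if `k(q+1) = N−1`, an MDS Hermitian self-orthogonal `[N+1,k+1]` code with dual
distance `k+2` exists; (c) if `N−1+q ≠ k(q+1) ≠ N−1`, such a code of length
`n' ∈ {N, N+1}` exists. -/
theorem stmt15 (q t : ℕ) (hq : IsPrimePow q) (ht1 : 1 ≤ t) (ht2 : t ≤ q)
    (N : ℕ) (hN : N = t * q)
    (k : ℕ) (hk1 : 1 ≤ k) (hk2 : k ≤ (N + q - 1) / (q + 1))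
    (F : Type*) [Field F] [Fintype F] (hF : Fintype.card F = q ^ 2) :
    (∃ C : Submodule F (Fin N → F),
      Module.finrank F C = k ∧ IsHermSelfOrth q C ∧
      MinDistEq C (N - k + 1) ∧ MinDistEq (hermDual q C) (k + 1)) ∧
    (k * (q + 1) = N - 1 →
      ∃ C : Submodule F (Fin (N + 1) → F),
        Module.finrank F C = k + 1 ∧ IsHermSelfOrth q C ∧
        MinDistEq C ((N + 1) - (k + 1) + 1) ∧
        MinDistEq (hermDual q C) (k + 2)) ∧
    (N - 1 + q ≠ k * (q + 1) → k * (q + 1) ≠ N - 1 →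
      ∃ n' : ℕ, (n' = N ∨ n' = N + 1) ∧
        ∃ C : Submodule F (Fin n' → F),
          Module.finrank F C = k + 1 ∧ IsHermSelfOrth q C ∧
          MinDistEq C (n' - (k + 1) + 1) ∧
          MinDistEq (hermDual q C) (k + 2)) := by
  have hq2 : 2 ≤ q := hq.two_le
  obtain ⟨φ, hφ⟩ := exists_frob hq hF
  obtain ⟨f, hdeg, hf1, hfix, hcard⟩ := exists_trace_set hq2 hF φ hφ ht2
  rw [← hN] at hcard
  have hk3 : k * (q + 1) ≤ N + q - 1 := (Nat.le_div_iff_mul_le (by omega)).1 hk2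
  -- the degree bound `k` never exceeds `t`, because `(t + 1) (q + 1) > N + q - 1`
  have hkt : k ≤ t := by
    by_contra hlt
    have : (t + 1) * (q + 1) ≤ k * (q + 1) := Nat.mul_le_mul_right _ (by omega)
    have e : (t + 1) * (q + 1) = t * q + t + q + 1 := by ring
    omega
  have hNt : 2 * t ≤ N := by rw [hN, mul_comm 2]; exact Nat.mul_le_mul_left _ hq2
  refine ⟨?_, ?_, ?_⟩
  · have hkq : k ≤ q - 1 := by
      by_contra hlt
      have h1 : k = q := by omega
      have h2 : t = q := by omega
      subst h1 h2
      have : t * (t + 1) = t * t + t := by ring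
      have := Nat.mul_le_mul hq2 hq2
      omega
    refine grs_code hq2 hF φ hφ (fun x => f.eval (x ^ q + x)) hfix hcard hk1 (by omega) ?_
    intro i j hi hj
    exact moment_eq_zero hq2 hF f hdeg.le (K := k - 1) (by omega) (by omega) (by omega)
      (by omega) (by omega)
  · intro hkN
    -- the equation forces `t = q` and `k = q - 1`
    have hkq : k + 1 = q := by
      have h1 : q ∣ k + 1 := by
        have e : k * (q + 1) = k * q + k := by ring
        have e2 : k * q + (k + 1) = t * q := by omega
        exact (Nat.dvd_add_right (dvd_mul_left q k)).1 (e2 ▸ dvd_mul_left q t)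
      have h2 := Nat.le_of_dvd (by omega) h1
      by_contra hne
      have h3 : k = q := by omega
      have h4 : t = q := by omega
      subst h3 h4
      have : t * (t + 1) = t * t + t := by ring
      omega
    have htq : t = q := by
      by_contra hne
      have h1 : t + 1 = q := by omega
      have h2 : k = t := by omega
      subst h2
      have : k * (q + 1) = k * q + k := by ring
      omega
    have hf := hf1 htq
    refine extended_grs_code hq2 hF φ hφ (fun x => f.eval (x ^ q + x)) hfix hcard (by omega) ?_ ?_
    · intro i j hi hj hij
      exact moment_eq_zero hq2 hF f hdeg.le (K := k) (by omega) (by omega) (by omega)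
        (by omega) (by omega)
    · -- here `f = 1` and the moment is the sum of `x ^ (q ^ 2 - 1)`, i.e. `q ^ 2 - 1 = -1` in `F`
      classical
      have hpos : q ^ 2 - 1 ≠ 0 := by
        have := Nat.mul_le_mul hq2 hq2
        rw [sq]; omega
      have hexp : k + k * q = q ^ 2 - 1 := by
        have : q ^ 2 = k * q + q := by rw [sq]; nth_rewrite 1 [← hkq]; ring
        omega
      have hterm : ∀ x : F, f.eval (x ^ q + x) * (x ^ k * (x ^ k) ^ q) =
          1 - if x = 0 then 1 else 0 := by
        intro x
        rw [hf, Polynomial.eval_one, one_mul, ← pow_mul, ← pow_add, hexp]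
        split_ifs with hx
        · rw [hx, zero_pow hpos, sub_self]
        · rw [← hF, FiniteField.pow_card_sub_one_eq_one x hx, sub_zero]
      have hcast : (Fintype.card F : F) = 0 := FiniteField.cast_card_eq_zero F
      simp_rw [hterm, Finset.sum_sub_distrib]
      simp [hcast]
  · intro hne1 hne2
    have hk4 : k * (q + 1) = k * q + k := by ring
    have hkq : k + 2 ≤ q := by
      by_contra hlt
      have htk : t * q ≤ q * q := Nat.mul_le_mul_right _ ht2
      rcases (by omega : k = q ∨ k + 1 = q) with h | h
      · subst h
        omega
      · rcases (by omega : t = q ∨ t = k) with h' | h'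
        · subst h'
          have : t * t = k * t + t := by rw [← h]; ring
          omega
        · subst h'
          omega
    have h3t : 3 * t ≤ N := by rw [hN, mul_comm 3]; exact Nat.mul_le_mul_left _ (by omega)
    have hM : ∀ i j, i ≤ k → j ≤ k → ¬ (i = k ∧ j = k) →
        ∑ x : F, f.eval (x ^ q + x) * (x ^ i * (x ^ j) ^ q) = 0 := by
      intro i j hi hj hij
      exact moment_eq_zero hq2 hF f hdeg.le (K := k) (by omega) (by omega) (by omega)
        (by omega) (by omega)
    by_cases hγ : ∑ x : F, f.eval (x ^ q + x) * (x ^ k * (x ^ k) ^ q) = 0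
    · refine ⟨N, Or.inl rfl, grs_code hq2 hF φ hφ (fun x => f.eval (x ^ q + x)) hfix hcard
        (by omega) (by omega) ?_⟩
      intro i j hi hj
      by_cases hij : i = k ∧ j = k
      · rw [hij.1, hij.2, hγ]
      · exact hM i j (by omega) (by omega) hij
    · exact ⟨N + 1, Or.inr rfl, extended_grs_code hq2 hF φ hφ (fun x => f.eval (x ^ q + x)) hfix
        hcard (by omega) hM hγ⟩
end
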